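/- arXiv:2204.14126 — 9 statements merged into one kernel-verified Lean document; each statement's English description precedes it below -/
import Mathlib

section
/- Let 0 < a < 1, b > 1, c = (b-1)/(b-a), and define f : [0,1] → ℝ by f(x) = a·x for x ∈ [0,c] and f(x) = 1 - b·(1-x) for x ∈ (c,1]. Then for every x ∈ [0,1) the limit ℓ(x) := lim_{L→∞} f^[L](x)/a^L exists and is nonnegative; moreover, with β = -log a / log b (> 0), the function x ↦ (1-x)^β · ℓ(x) is bounded above on [0,1), and there exist ε > 0 and δ > 0 such that (1-x)^β · ℓ(x) ≥ δ for all x ∈ (1-ε, 1). In other words, ℓ(x) = R(x)/(1-x)^{-log_b a} with R nonnegative, bounded above, and bounded away from 0 near x = 1. -/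
open Filter Set

/-!
An orbit starting at `x < 1` is pushed away from the repelling fixed point `1`, its distance to `1`
growing by the factor `b` at each step, until it enters `[0, c]` at some time `n` and some point
`y`; from then on it is multiplied by `a` at each step. So `f^[L] x / a ^ L` is eventually
constant, equal to `y / a ^ n`. Since `1 - y = b ^ n * (1 - x)` and `b ^ β = a⁻¹`, the factor
`(1 - x) ^ β` turns this limit into `(1 - y) ^ β * y`. This is at most `1`, and it is bounded away
from `0` when the orbit starts in `(c, 1)`, because `y` is then in the image of the expanding
branch, whose values are at least `1 - b * (1 - c) > 0`.
-/

section FirstEntry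

variable {α : Type*} {f : α → α} {c x : α}

/-- The first time at which the orbit of `x` under `f` enters `Set.Iic c`, with the junk value `0`
if it never does. -/
noncomputable def entryTime [LE α] (f : α → α) (c x : α) : ℕ := sInf {n | f^[n] x ≤ c}

/-- The point at which the orbit of `x` under `f` first enters `Set.Iic c`. It is `x` itself if the
orbit never enters. -/
noncomputable def entryPoint [LE α] (f : α → α) (c x : α) : α := f^[entryTime f c x] x

lemma lt_iterate_of_lt_entryTime [LinearOrder α] {k : ℕ} (hk : k < entryTime f c x) : c < f^[k] x :=
  not_le.1 (Nat.notMem_of_lt_sInf hk)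

lemma entryPoint_le [LE α] (h : ∃ n, f^[n] x ≤ c) : entryPoint f c x ≤ c := Nat.sInf_mem h

lemma entryPoint_of_le [LE α] (hx : x ≤ c) : entryPoint f c x = x := by
  have htime : entryTime f c x = 0 := Nat.sInf_eq_zero.2 (Or.inl hx)
  simp [entryPoint, htime]

lemma exists_apply_iterate_eq_entryPoint [LinearOrder α] (h : ∃ n, f^[n] x ≤ c) (hx : c < x) :
    ∃ k, (∀ j ≤ k, c < f^[j] x) ∧ f (f^[k] x) = entryPoint f c x := by
  have hpos : entryTime f c x ≠ 0 := fun h0 ↦ by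
    have hle := entryPoint_le h
    rw [entryPoint, h0] at hle
    exact hx.not_ge hle
  obtain ⟨k, hk⟩ := Nat.exists_eq_succ_of_ne_zero hpos
  refine ⟨k, fun j hj ↦ lt_iterate_of_lt_entryTime (by omega), ?_⟩
  rw [entryPoint, hk, Function.iterate_succ_apply']

end FirstEntry

section ContractingBranch

lemma eqOn_iterate_of_mapsTo {α : Type*} {f g : α → α} {s : Set α} (h : EqOn f g s)
    (hg : MapsTo g s s) (n : ℕ) : EqOn f^[n] g^[n] s := by
  induction n with
  | zero => exact fun _ _ ↦ rfl
  | succ n ih =>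
    intro x hx
    rw [Function.iterate_succ_apply, Function.iterate_succ_apply, h hx, ih (hg hx)]

lemma mapsTo_mul_left_Icc_zero {R : Type*} [Semiring R] [PartialOrder R] [IsOrderedRing R]
    {a : R} (c : R) (ha0 : 0 ≤ a) (ha1 : a ≤ 1) : MapsTo (a * ·) (Icc 0 c) (Icc 0 c) :=
  fun _ hx ↦ ⟨mul_nonneg ha0 hx.1, (mul_le_of_le_one_left hx.1 ha1).trans hx.2⟩

/-- The limit of `f^[L] x / a ^ L` when `f` is multiplication by `a` from the first entry of the
orbit into `Set.Iic c` on. -/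
noncomputable def normalizedLimit {K : Type*} [DivInvMonoid K] [LE K] (a : K) (f : K → K)
    (c x : K) : K :=
  entryPoint f c x / a ^ entryTime f c x

lemma tendsto_iterate_div_pow {K : Type*} [Field K] [LinearOrder K] [IsStrictOrderedRing K]
    [TopologicalSpace K] {a c x : K} {f : K → K} (ha0 : 0 < a) (ha1 : a ≤ 1)
    (hf : EqOn f (a * ·) (Icc 0 c)) (hx : entryPoint f c x ∈ Icc 0 c) :
    Tendsto (fun L ↦ f^[L] x / a ^ L) atTop (nhds (normalizedLimit a f c x)) := by
  rw [← tendsto_add_atTop_iff_nat (entryTime f c x)]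
  refine tendsto_const_nhds.congr fun m ↦ ?_
  have hiter : f^[m] (entryPoint f c x) = a ^ m * entryPoint f c x := by
    rw [eqOn_iterate_of_mapsTo hf (mapsTo_mul_left_Icc_zero c ha0.le ha1) m hx,
      mul_left_iterate_apply]
  rw [Function.iterate_add_apply, ← entryPoint, hiter, pow_add,
    mul_div_mul_left _ _ (pow_pos ha0 m).ne', normalizedLimit]

end ContractingBranch

section ExpandingBranch

section Ring

variable {R : Type*} [Ring R] [LinearOrder R] [IsOrderedRing R] {b c p x : R} {f : R → R}

lemma sub_iterate_eq_pow_mul (hb : 0 ≤ b) (hf : EqOn f (fun x ↦ p - b * (p - x)) (Ioc c p))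
    (hx : x ≤ p) {n : ℕ} (hn : ∀ k < n, c < f^[k] x) : p - f^[n] x = b ^ n * (p - x) := by
  induction n with
  | zero => simp
  | succ n ih =>
    have ih' := ih fun k hk ↦ hn k (hk.trans n.lt_succ_self)
    have hmem : f^[n] x ∈ Ioc c p :=
      ⟨hn n n.lt_succ_self, sub_nonneg.1 (ih' ▸ mul_nonneg (pow_nonneg hb n) (sub_nonneg.2 hx))⟩
    rw [Function.iterate_succ_apply', hf hmem, sub_sub_cancel, ih', pow_succ', mul_assoc]

lemma sub_entryPoint (hb : 0 ≤ b) (hf : EqOn f (fun x ↦ p - b * (p - x)) (Ioc c p))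
    (hx : x ≤ p) : p - entryPoint f c x = b ^ entryTime f c x * (p - x) :=
  sub_iterate_eq_pow_mul hb hf hx fun _ ↦ lt_iterate_of_lt_entryTime

lemma sub_mul_sub_le_entryPoint (hb : 0 ≤ b) (hf : EqOn f (fun x ↦ p - b * (p - x)) (Ioc c p))
    (hx : x ∈ Ioc c p) (h : ∃ n, f^[n] x ≤ c) : p - b * (p - c) ≤ entryPoint f c x := by
  obtain ⟨k, hk, hkx⟩ := exists_apply_iterate_eq_entryPoint h hx.1
  have hdist := sub_iterate_eq_pow_mul hb hf hx.2 fun j hj ↦ hk j hj.le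
  have hkp : f^[k] x ≤ p :=
    sub_nonneg.1 (hdist ▸ mul_nonneg (pow_nonneg hb k) (sub_nonneg.2 hx.2))
  have hck : c ≤ f^[k] x := (hk k le_rfl).le
  rw [← hkx, hf ⟨hk k le_rfl, hkp⟩]
  dsimp only
  gcongr

end Ring

lemma exists_iterate_le {K : Type*} [Field K] [LinearOrder K] [IsStrictOrderedRing K]
    [Archimedean K] {b c p x : K} {f : K → K} (hb : 1 < b)
    (hf : EqOn f (fun x ↦ p - b * (p - x)) (Ioc c p)) (hx : x < p) : ∃ n, f^[n] x ≤ c := by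
  by_contra! hstay
  obtain ⟨n, hn⟩ := pow_unbounded_of_one_lt ((p - c) / (p - x)) hb
  rw [div_lt_iff₀ (sub_pos.2 hx),
    ← sub_iterate_eq_pow_mul (zero_le_one.trans hb.le) hf hx.le fun k _ ↦ hstay k] at hn
  exact (hstay n).not_gt ((sub_lt_sub_iff_left p).1 hn)

end ExpandingBranch

section Singularity

variable {a b c x β : ℝ} {f : ℝ → ℝ}

lemma rpow_neg_log_div_log (ha : 0 < a) (hb : 1 < b) :
    b ^ (-Real.log a / Real.log b) = a⁻¹ := by
  rw [← Real.log_inv, Real.log_div_log,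
    Real.rpow_logb (one_pos.trans hb) hb.ne' (inv_pos.2 ha)]

lemma neg_log_div_log_nonneg (ha0 : 0 ≤ a) (ha1 : a ≤ 1) (hb : 1 ≤ b) :
    0 ≤ -Real.log a / Real.log b :=
  div_nonneg (neg_nonneg.2 (Real.log_nonpos ha0 ha1)) (Real.log_nonneg hb)

lemma rpow_mul_normalizedLimit (hb : 0 ≤ b) (hβ : b ^ β = a⁻¹)
    (hf : EqOn f (fun x ↦ 1 - b * (1 - x)) (Ioc c 1)) (hx : x ≤ 1) :
    (1 - x) ^ β * normalizedLimit a f c x = (1 - entryPoint f c x) ^ β * entryPoint f c x := by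
  have hpow : (b ^ entryTime f c x) ^ β = (a ^ entryTime f c x)⁻¹ := by
    rw [← Real.rpow_natCast, ← Real.rpow_mul hb, mul_comm, Real.rpow_mul hb, hβ,
      Real.rpow_natCast, inv_pow]
  rw [sub_entryPoint hb hf hx, Real.mul_rpow (pow_nonneg hb _) (sub_nonneg.2 hx), hpow,
    normalizedLimit]
  ring

lemma entryPoint_mem_Icc (hb : 1 < b) (hjump : 0 ≤ 1 - b * (1 - c))
    (hf : EqOn f (fun x ↦ 1 - b * (1 - x)) (Ioc c 1)) (hx : x ∈ Ico 0 1) :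
    entryPoint f c x ∈ Icc 0 c := by
  have henter := exists_iterate_le hb hf hx.2
  refine ⟨?_, entryPoint_le henter⟩
  rcases le_or_gt x c with hxc | hcx
  · exact (entryPoint_of_le hxc).symm ▸ hx.1
  · exact hjump.trans
      (sub_mul_sub_le_entryPoint (zero_le_one.trans hb.le) hf ⟨hcx, hx.2.le⟩ henter)

lemma rpow_mul_normalizedLimit_le_one (hb : 1 < b) (hβ : b ^ β = a⁻¹) (hβ0 : 0 ≤ β) (hc1 : c ≤ 1)
    (hjump : 0 ≤ 1 - b * (1 - c)) (hf : EqOn f (fun x ↦ 1 - b * (1 - x)) (Ioc c 1))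
    (hx : x ∈ Ico 0 1) : (1 - x) ^ β * normalizedLimit a f c x ≤ 1 := by
  obtain ⟨hy0, hyc⟩ := entryPoint_mem_Icc hb hjump hf hx
  have hy1 : entryPoint f c x ≤ 1 := hyc.trans hc1
  rw [rpow_mul_normalizedLimit (zero_le_one.trans hb.le) hβ hf hx.2.le]
  exact mul_le_one₀ (Real.rpow_le_one (sub_nonneg.2 hy1) (sub_le_self 1 hy0) hβ0) hy0 hy1

lemma le_rpow_mul_normalizedLimit (hb : 1 < b) (hβ : b ^ β = a⁻¹) (hβ0 : 0 ≤ β)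
    (hjump : 0 ≤ 1 - b * (1 - c)) (hf : EqOn f (fun x ↦ 1 - b * (1 - x)) (Ioc c 1))
    (hx : x ∈ Ioo c 1) :
    (1 - c) ^ β * (1 - b * (1 - c)) ≤ (1 - x) ^ β * normalizedLimit a f c x := by
  have hb0 : 0 ≤ b := zero_le_one.trans hb.le
  have hc : 0 ≤ 1 - c := sub_nonneg.2 (hx.1.trans hx.2).le
  have henter := exists_iterate_le hb hf hx.2
  have hlow := sub_mul_sub_le_entryPoint hb0 hf (Ioo_subset_Ioc_self hx) henter
  have hdist : 1 - c ≤ 1 - entryPoint f c x := sub_le_sub_left (entryPoint_le henter) 1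
  rw [rpow_mul_normalizedLimit hb0 hβ hf hx.2.le]
  exact mul_le_mul (Real.rpow_le_rpow hc hdist hβ0) hlow hjump
    (Real.rpow_nonneg (hc.trans hdist) β)

end Singularity

lemma one_sub_mul_one_sub_div_sub {K : Type*} [Field K] {a b : K} (hab : b - a ≠ 0) :
    1 - b * (1 - (b - 1) / (b - a)) = a * ((b - 1) / (b - a)) := by
  field_simp
  ring

lemma sub_one_div_sub_mem_Ioo {K : Type*} [Field K] [LinearOrder K] [IsStrictOrderedRing K]
    {a b : K} (ha : a < 1) (hb : 1 < b) : (b - 1) / (b - a) ∈ Ioo 0 1 :=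
  have hba : 0 < b - a := sub_pos.2 (ha.trans hb)
  ⟨div_pos (sub_pos.2 hb) hba, (div_lt_one hba).2 (sub_lt_sub_left ha b)⟩

theorem piecewise_linear_iteration_singularity_general
    {a b c : ℝ} (ha : 0 < a) (ha1 : a ≤ 1) (hb : 1 < b) (hc1 : c < 1)
    (hjump : 0 < 1 - b * (1 - c)) (f : ℝ → ℝ)
    (hf1 : ∀ x ∈ Set.Icc (0 : ℝ) c, f x = a * x)
    (hf2 : ∀ x ∈ Set.Ioc c 1, f x = 1 - b * (1 - x)) :
    ∃ ℓ : ℝ → ℝ,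
      (∀ x ∈ Set.Ico (0 : ℝ) 1,
        Tendsto (fun L => f^[L] x / a ^ L) atTop (nhds (ℓ x)) ∧ 0 ≤ ℓ x) ∧
      (∃ Cb : ℝ, ∀ x ∈ Set.Ico (0 : ℝ) 1,
        (1 - x) ^ (-Real.log a / Real.log b) * ℓ x ≤ Cb) ∧
      (∃ ε > (0 : ℝ), ∃ δ > (0 : ℝ), ∀ x ∈ Set.Ioo (1 - ε) 1,
        δ ≤ (1 - x) ^ (-Real.log a / Real.log b) * ℓ x) := by
  have hβ := rpow_neg_log_div_log ha hb
  have hβ0 := neg_log_div_log_nonneg ha.le ha1 hb.le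
  refine ⟨normalizedLimit a f c, fun x hx ↦ ?_,
    ⟨1, fun x ↦ rpow_mul_normalizedLimit_le_one hb hβ hβ0 hc1.le hjump.le hf2⟩,
    1 - c, sub_pos.2 hc1, (1 - c) ^ (-Real.log a / Real.log b) * (1 - b * (1 - c)),
    mul_pos (Real.rpow_pos_of_pos (sub_pos.2 hc1) _) hjump, fun x hx ↦ ?_⟩
  · have hy := entryPoint_mem_Icc hb hjump.le hf2 hx
    exact ⟨tendsto_iterate_div_pow ha ha1 hf1 hy, div_nonneg hy.1 (pow_pos ha _).le⟩
  · rw [sub_sub_cancel] at hx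
    exact le_rpow_mul_normalizedLimit hb hβ hβ0 hjump.le hf2 hx

/-- Iterating the piecewise linear map `f(x) = a·x` on `[0,c]`, `f(x) = 1 - b(1-x)` on `(c,1]`
(with `0 < a < 1 < b`, `c = (b-1)/(b-a)`) and normalizing by `a^L` yields a function with a
singularity of order `-log_b a` at `x = 1`:
`lim_L f^[L](x)/a^L = R(x)/(1-x)^{-log_b a}` with `R` nonnegative, bounded above, and
bounded away from `0` near `x = 1`. -/
theorem piecewise_linear_iteration_singularity
    (a b c : ℝ) (ha : 0 < a) (ha1 : a < 1) (hb : 1 < b)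
    (hc : c = (b - 1) / (b - a)) (f : ℝ → ℝ)
    (hf1 : ∀ x ∈ Set.Icc (0 : ℝ) c, f x = a * x)
    (hf2 : ∀ x ∈ Set.Ioc c 1, f x = 1 - b * (1 - x)) :
    ∃ ℓ : ℝ → ℝ,
      (∀ x ∈ Set.Ico (0 : ℝ) 1,
        Tendsto (fun L => f^[L] x / a ^ L) atTop (nhds (ℓ x)) ∧ 0 ≤ ℓ x) ∧
      (∃ Cb : ℝ, ∀ x ∈ Set.Ico (0 : ℝ) 1,
        (1 - x) ^ (-Real.log a / Real.log b) * ℓ x ≤ Cb) ∧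
      (∃ ε > (0 : ℝ), ∃ δ > (0 : ℝ), ∀ x ∈ Set.Ioo (1 - ε) 1,
        δ ≤ (1 - x) ^ (-Real.log a / Real.log b) * ℓ x) := by
  obtain ⟨hc0, hc1⟩ : c ∈ Ioo 0 1 := hc ▸ sub_one_div_sub_mem_Ioo ha1 hb
  have hkink : 1 - b * (1 - c) = a * c :=
    hc ▸ one_sub_mul_one_sub_div_sub (sub_pos.2 (ha1.trans hb)).ne'
  exact piecewise_linear_iteration_singularity_general ha ha1.le hb hc1
    (hkink ▸ mul_pos ha hc0) f hf1 hf2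
end

section
/- Let f be given on [0,1] by a convergent power series f(z) = ∑_{i=0}^∞ a_i z^i with a_i ≥ 0 for all i, satisfying a_0 = 0 (f(0) = 0), ∑_{i≥1} a_i = 1 (f(1) = 1), 0 < a_1 < 1 (i.e. 0 < f'(0) < 1), and ∑_i i·a_i < ∞ (i.e. f'(1) < ∞). Then for every z ∈ [0,1) the limit ψ(z) := lim_{L→∞} K_L(z)/(a_1^L·(L+1)) exists and is finite with ψ(z) ≥ z, and ψ has a singularity at 1: for every M > 0 there exists z_0 ∈ (0,1) such that ψ(z) > M for all z ∈ (z_0,1). -/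
open Filter Set

open scoped Topology

/-!
On `[0, 1)` the orbit `x_L = f^[L] z` decays geometrically to the attracting fixed point `0`, and
`x_L / a₁^L` increases to the value `h z` of the Kœnigs function of `f`. Dividing the NTK recursion
by `a₁^(L+1)` gives `v_{L+1} = x_{L+1} / a₁^(L+1) + r_L v_L` with `r_L = f' x_L / a₁`. Since
`f' x - a₁ = O(x)` as `x → 0`, `∑ |r_L - 1| < ∞`, so after division by the convergent product
`∏ r_j` the increments of `v` converge, and Cesàro averaging yields `v_L / (L + 1) → h z`. Hence
`ψ = h`. Since `h z ≥ f^[L] z / a₁^L` and `f^[L] z → 1` as `z → 1⁻`, the lower limit of `h` at `1`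
is at least `a₁^(-L)` for every `L`, hence infinite.
-/

section Recurrences

variable {E : Type*} [NormedAddCommGroup E] [NormedSpace ℝ E]

lemma tendsto_inv_smul_of_tendsto_sub {x : ℕ → E} {l : E}
    (hx : Tendsto (fun n => x (n + 1) - x n) atTop (𝓝 l)) :
    Tendsto (fun n : ℕ => ((n : ℝ) + 1)⁻¹ • x n) atTop (𝓝 l) := by
  have hmean : Tendsto (fun n : ℕ => ((n : ℝ) + 1)⁻¹ • (x (n + 1) - x 0)) atTop (𝓝 l) := by
    simpa only [Function.comp_def, Finset.sum_range_sub, Nat.cast_add_one]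
      using hx.cesaro_smul.comp (tendsto_add_atTop_nat 1)
  have hinv : Tendsto (fun n : ℕ => ((n : ℝ) + 1)⁻¹) atTop (𝓝 0) := by
    simpa only [one_div] using tendsto_one_div_add_atTop_nhds_zero_nat (𝕜 := ℝ)
  have hdiff := hmean.sub (hinv.smul (hx.sub_const (x 0)))
  rw [zero_smul, sub_zero] at hdiff
  refine hdiff.congr fun n => ?_
  rw [← smul_sub]
  congr 1
  abel

lemma tendsto_inv_smul_of_linear_recurrence {u v : ℕ → E} {ε : ℕ → ℝ} {l : E}
    (hv : ∀ n, v (n + 1) = u (n + 1) + (1 + ε n) • v n) (hε : Summable ε)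
    (hε0 : ∀ n, 1 + ε n ≠ 0) (hu : Tendsto u atTop (𝓝 l)) :
    Tendsto (fun n : ℕ => ((n : ℝ) + 1)⁻¹ • v n) atTop (𝓝 l) := by
  set P : ℕ → ℝ := fun n => ∏ i ∈ Finset.range n, (1 + ε i)
  set p : ℝ := ∏' i, (1 + ε i)
  have hP0 (n : ℕ) : P n ≠ 0 := Finset.prod_ne_zero_iff.2 fun i _ => hε0 i
  have hp0 : p ≠ 0 := tprod_one_add_ne_zero_of_summable hε0 hε.norm
  have hPp : Tendsto P atTop (𝓝 p) :=
    (Real.multipliable_one_add_of_summable hε).tendsto_prod_tprod_nat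
  have hincr (n : ℕ) :
      (P (n + 1))⁻¹ • v (n + 1) - (P n)⁻¹ • v n = (P (n + 1))⁻¹ • u (n + 1) := by
    have hsucc : (P (n + 1))⁻¹ * (1 + ε n) = (P n)⁻¹ := by
      simp only [P]
      rw [Finset.prod_range_succ, mul_inv, inv_mul_cancel_right₀ (hε0 n)]
    rw [hv, smul_add, smul_smul, hsucc, add_sub_cancel_right]
  have hmean : Tendsto (fun n : ℕ => ((n : ℝ) + 1)⁻¹ • (P n)⁻¹ • v n) atTop (𝓝 (p⁻¹ • l)) := by
    refine tendsto_inv_smul_of_tendsto_sub ?_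
    simp only [hincr]
    exact ((hPp.inv₀ hp0).smul hu).comp (tendsto_add_atTop_nat 1)
  have hlim := hPp.smul hmean
  rw [smul_inv_smul₀ hp0] at hlim
  refine hlim.congr fun n => ?_
  rw [smul_comm, smul_inv_smul₀ (hP0 n)]

lemma bddAbove_range_of_le_one_add_mul {u ε : ℕ → ℝ} (hu0 : 0 ≤ u 0)
    (hu : ∀ n, u (n + 1) ≤ (1 + ε n) * u n) (hε : ∀ n, 0 ≤ ε n) (hs : Summable ε) :
    BddAbove (range u) := by
  refine ⟨u 0 * Real.exp (∑' i, ε i), forall_mem_range.2 fun n => ?_⟩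
  have hgronwall : u n ≤ u 0 * Real.exp (∑ i ∈ Finset.Ico 0 n, ε i) := by
    simpa using discrete_gronwall (b := 0) hu0 (by simpa using hu) (fun i _ => hε i)
      (by simp) n.zero_le
  refine hgronwall.trans ?_
  gcongr
  exact hs.sum_le_tsum _ fun i _ => hε i

end Recurrences

section PowerSeries

variable {a : ℕ → ℝ} {s t x y A : ℝ}

lemma coeff_one_mul_le_of_hasSum (ha : ∀ i, 0 ≤ a i) (hx : 0 ≤ x)
    (hs : HasSum (fun i => a i * x ^ i) s) : a 1 * x ≤ s := by
  simpa using le_hasSum hs 1 fun i _ => mul_nonneg (ha i) (pow_nonneg hx i)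

lemma coeff_one_le_of_hasSum_deriv (ha : ∀ i, 0 ≤ a i) (hx : 0 ≤ x)
    (hs : HasSum (fun i : ℕ => (i : ℝ) * a i * x ^ (i - 1)) s) : a 1 ≤ s := by
  simpa using le_hasSum hs 1 fun i _ =>
    mul_nonneg (mul_nonneg i.cast_nonneg (ha i)) (pow_nonneg hx (i - 1))

lemma hasSum_le_quadratic (ha : ∀ i, 0 ≤ a i) (ha0 : a 0 = 0) (hA : HasSum a A)
    (hx : 0 ≤ x) (hx1 : x ≤ 1) (hs : HasSum (fun i => a i * x ^ i) s) :
    s ≤ (a 1 + (A - a 1) * x) * x := by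
  suffices s ≤ a 1 * (x - x ^ 2) + A * x ^ 2 by linarith
  refine hasSum_le (fun i => ?_) hs
    ((hasSum_ite_eq 1 (a 1 * (x - x ^ 2))).add (hA.mul_right (x ^ 2)))
  rcases i with _ | _ | i
  · simp [ha0]
  · simp only [zero_add, if_true, pow_one]
    linarith
  · simpa using mul_le_mul_of_nonneg_left
      (pow_le_pow_of_le_one hx hx1 (Nat.le_add_left 2 i)) (ha (i + 2))

/- The slope `(F x - F 0) / x` of a power series `F` with nonnegative coefficients increases
with `x`; here `F` is the termwise derivative, and denominators are cleared. -/
lemma mul_hasSum_deriv_sub_le (ha : ∀ i, 0 ≤ a i) (hx : 0 ≤ x) (hxy : x ≤ y)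
    (hs : HasSum (fun i : ℕ => (i : ℝ) * a i * x ^ (i - 1)) s)
    (ht : HasSum (fun i : ℕ => (i : ℝ) * a i * y ^ (i - 1)) t) :
    y * (s - a 1) ≤ x * (t - a 1) := by
  refine hasSum_le (fun i => ?_) ((hs.sub (hasSum_ite_eq 1 (a 1))).mul_left y)
    ((ht.sub (hasSum_ite_eq 1 (a 1))).mul_left x)
  rcases i with _ | _ | i
  · simp
  · simp
  · have hcoeff : 0 ≤ ((i + 2 : ℕ) : ℝ) * a (i + 2) * (x * y) :=
      mul_nonneg (mul_nonneg (Nat.cast_nonneg _) (ha _)) (mul_nonneg hx (hx.trans hxy))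
    have hpow := mul_le_mul_of_nonneg_left (pow_le_pow_left₀ hx hxy i) hcoeff
    simp only [Nat.add_eq_right, Nat.add_one_ne_zero, if_false, sub_zero, Nat.add_sub_cancel]
    convert hpow using 1 <;> ring

end PowerSeries

/-- The Kœnigs function `h` of a map `f` fixing `0` with multiplier `c`: the solution of Schröder's
equation `h ∘ f = c * h` normalized by `h'(0) = 1`, obtained from the rescaled iterates of `f`. It
is encoded as a supremum because these increase with `n` whenever `c * x ≤ f x` along the orbit;
it has the junk value `0` where they are unbounded. -/
noncomputable def koenigsFunction (f : ℝ → ℝ) (c z : ℝ) : ℝ :=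
  ⨆ n : ℕ, f^[n] z / c ^ n

/-- `f` is the dual activation with coefficients `a`: a power series on `[0, 1)` with nonnegative
coefficients of sum `1`, for which `0` is an attracting fixed point of multiplier `a 1 ∈ (0, 1)`.
The value `f 1` is left free, since orbits starting in `[0, 1)` stay there. -/
structure IsDualActivation (a : ℕ → ℝ) (f : ℝ → ℝ) : Prop where
  coeff_nonneg : ∀ i, 0 ≤ a i
  coeff_zero : a 0 = 0
  coeff_one_pos : 0 < a 1
  coeff_one_lt_one : a 1 < 1
  hasSum_coeff : HasSum a 1
  hasSum : ∀ x ∈ Ico (0 : ℝ) 1, HasSum (fun i => a i * x ^ i) (f x)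

namespace IsDualActivation

variable {a : ℕ → ℝ} {f f' : ℝ → ℝ} {x z : ℝ}

lemma coeff_one_mul_le (h : IsDualActivation a f) (hx : x ∈ Ico (0 : ℝ) 1) : a 1 * x ≤ f x :=
  coeff_one_mul_le_of_hasSum h.coeff_nonneg hx.1 (h.hasSum x hx)

lemma le_quadratic (h : IsDualActivation a f) (hx : x ∈ Ico (0 : ℝ) 1) :
    f x ≤ (a 1 + (1 - a 1) * x) * x :=
  hasSum_le_quadratic h.coeff_nonneg h.coeff_zero h.hasSum_coeff hx.1 hx.2.le (h.hasSum x hx)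

lemma mapsTo_Icc (h : IsDualActivation a f) (hz : z < 1) : MapsTo f (Icc 0 z) (Icc 0 z) := by
  intro x hx
  have hx1 : x ∈ Ico (0 : ℝ) 1 := ⟨hx.1, hx.2.trans_lt hz⟩
  have hfactor : a 1 + (1 - a 1) * x ≤ 1 := by nlinarith [h.coeff_one_lt_one, hx1.2]
  exact ⟨(mul_nonneg h.coeff_one_pos.le hx.1).trans (h.coeff_one_mul_le hx1),
    (h.le_quadratic hx1).trans ((mul_le_of_le_one_left hx.1 hfactor).trans hx.2)⟩

lemma iterate_mem_Icc (h : IsDualActivation a f) (hz : z ∈ Ico (0 : ℝ) 1) (n : ℕ) :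
    f^[n] z ∈ Icc 0 z :=
  (h.mapsTo_Icc hz.2).iterate n ⟨hz.1, le_rfl⟩

lemma iterate_mem_Ico (h : IsDualActivation a f) (hz : z ∈ Ico (0 : ℝ) 1) (n : ℕ) :
    f^[n] z ∈ Ico 0 1 :=
  Icc_subset_Ico_right hz.2 (h.iterate_mem_Icc hz n)

lemma iterate_le_pow_mul (h : IsDualActivation a f) (hz : z ∈ Ico (0 : ℝ) 1) (n : ℕ) :
    f^[n] z ≤ (a 1 + (1 - a 1) * z) ^ n * z := by
  have hcoeff : 0 ≤ 1 - a 1 := sub_nonneg.2 h.coeff_one_lt_one.le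
  refine le_geom (u := fun n => f^[n] z)
    (add_nonneg h.coeff_one_pos.le (mul_nonneg hcoeff hz.1)) n fun k _ => ?_
  have hk := h.iterate_mem_Icc hz k
  rw [Function.iterate_succ_apply']
  refine (h.le_quadratic (h.iterate_mem_Ico hz k)).trans ?_
  gcongr
  exacts [hk.1, hk.2]

lemma summable_iterate (h : IsDualActivation a f) (hz : z ∈ Ico (0 : ℝ) 1) :
    Summable fun n => f^[n] z := by
  have hq0 : 0 ≤ a 1 + (1 - a 1) * z :=
    add_nonneg h.coeff_one_pos.le (mul_nonneg (sub_nonneg.2 h.coeff_one_lt_one.le) hz.1)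
  have hq1 : a 1 + (1 - a 1) * z < 1 := by nlinarith [h.coeff_one_lt_one, hz.2]
  exact Summable.of_nonneg_of_le (fun n => (h.iterate_mem_Icc hz n).1) (h.iterate_le_pow_mul hz)
    ((summable_geometric_of_lt_one hq0 hq1).mul_right z)

lemma monotone_iterate_div_pow (h : IsDualActivation a f) (hz : z ∈ Ico (0 : ℝ) 1) :
    Monotone fun n => f^[n] z / a 1 ^ n := by
  have hc := h.coeff_one_pos
  refine monotone_nat_of_le_succ fun n => ?_
  rw [Function.iterate_succ_apply', pow_succ', ← div_div]
  gcongr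
  rw [le_div_iff₀' hc]
  exact h.coeff_one_mul_le (h.iterate_mem_Ico hz n)

lemma bddAbove_range_iterate_div_pow (h : IsDualActivation a f) (hz : z ∈ Ico (0 : ℝ) 1) :
    BddAbove (range fun n => f^[n] z / a 1 ^ n) := by
  have hc := h.coeff_one_pos
  refine bddAbove_range_of_le_one_add_mul (ε := fun n => (1 - a 1) / a 1 * f^[n] z)
    (by simpa using hz.1) (fun n => ?_)
    (fun n => mul_nonneg (div_nonneg (sub_nonneg.2 h.coeff_one_lt_one.le) hc.le)
      (h.iterate_mem_Icc hz n).1)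
    ((h.summable_iterate hz).mul_left _)
  calc f^[n + 1] z / a 1 ^ (n + 1)
      ≤ (a 1 + (1 - a 1) * f^[n] z) * f^[n] z / a 1 ^ (n + 1) := by
        rw [Function.iterate_succ_apply']
        gcongr
        exact h.le_quadratic (h.iterate_mem_Ico hz n)
    _ = (1 + (1 - a 1) / a 1 * f^[n] z) * (f^[n] z / a 1 ^ n) := by
        rw [pow_succ', mul_div_mul_comm, add_div, div_self hc.ne', mul_div_right_comm]

lemma tendsto_koenigsFunction (h : IsDualActivation a f) (hz : z ∈ Ico (0 : ℝ) 1) :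
    Tendsto (fun n => f^[n] z / a 1 ^ n) atTop (𝓝 (koenigsFunction f (a 1) z)) :=
  tendsto_atTop_ciSup (h.monotone_iterate_div_pow hz) (h.bddAbove_range_iterate_div_pow hz)

lemma iterate_div_pow_le_koenigsFunction (h : IsDualActivation a f) (hz : z ∈ Ico (0 : ℝ) 1)
    (n : ℕ) : f^[n] z / a 1 ^ n ≤ koenigsFunction f (a 1) z :=
  le_ciSup (h.bddAbove_range_iterate_div_pow hz) n

lemma self_le_koenigsFunction (h : IsDualActivation a f) (hz : z ∈ Ico (0 : ℝ) 1) :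
    z ≤ koenigsFunction f (a 1) z := by
  simpa using h.iterate_div_pow_le_koenigsFunction hz 0

lemma tendsto_nhdsLT_one (h : IsDualActivation a f) : Tendsto f (𝓝[<] 1) (𝓝[<] 1) := by
  have hIco : ∀ᶠ x in 𝓝[<] (1 : ℝ), x ∈ Ico (0 : ℝ) 1 := Ico_mem_nhdsLT zero_lt_one
  refine tendsto_nhdsWithin_iff.2 ⟨?_, ?_⟩
  · refine (Real.tendsto_tsum_powerSeries_nhdsWithin_lt
      h.hasSum_coeff.tendsto_sum_nat).congr' ?_
    filter_upwards [hIco] with x hx using (h.hasSum x hx).tsum_eq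
  · filter_upwards [hIco] with x hx using (h.iterate_mem_Ico hx 1).2

lemma tendsto_koenigsFunction_nhdsLT_one (h : IsDualActivation a f) :
    Tendsto (koenigsFunction f (a 1)) (𝓝[<] 1) atTop := by
  refine tendsto_atTop.2 fun M => ?_
  obtain ⟨n, hn⟩ : ∃ n : ℕ, M < 1 / a 1 ^ n := by
    simpa using pow_unbounded_of_one_lt M ((one_lt_inv₀ h.coeff_one_pos).2 h.coeff_one_lt_one)
  have hlim : Tendsto (fun z => f^[n] z / a 1 ^ n) (𝓝[<] 1) (𝓝 (1 / a 1 ^ n)) :=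
    ((tendsto_nhdsWithin_iff.1 (h.tendsto_nhdsLT_one.iterate n)).1).div_const _
  filter_upwards [hlim.eventually_const_lt hn, Ico_mem_nhdsLT zero_lt_one] with z hMz hz
  exact hMz.le.trans (h.iterate_div_pow_le_koenigsFunction hz n)

lemma coeff_one_le_deriv (h : IsDualActivation a f)
    (hf' : ∀ x ∈ Ico (0 : ℝ) 1, HasSum (fun i : ℕ => (i : ℝ) * a i * x ^ (i - 1)) (f' x))
    (hx : x ∈ Ico (0 : ℝ) 1) : a 1 ≤ f' x :=
  coeff_one_le_of_hasSum_deriv h.coeff_nonneg hx.1 (hf' x hx)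

lemma summable_deriv_iterate_sub (h : IsDualActivation a f)
    (hf' : ∀ x ∈ Ico (0 : ℝ) 1, HasSum (fun i : ℕ => (i : ℝ) * a i * x ^ (i - 1)) (f' x))
    (hz : z ∈ Ico (0 : ℝ) 1) : Summable fun n => f' (f^[n] z) - a 1 := by
  obtain ⟨y, hzy, hy1⟩ := exists_between hz.2
  have hy0 : 0 < y := hz.1.trans_lt hzy
  refine Summable.of_nonneg_of_le
    (fun n => sub_nonneg.2 (h.coeff_one_le_deriv hf' (h.iterate_mem_Ico hz n))) (fun n => ?_)
    ((h.summable_iterate hz).mul_right ((f' y - a 1) / y))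
  have hn := h.iterate_mem_Icc hz n
  rw [← mul_div_assoc, le_div_iff₀' hy0]
  exact mul_hasSum_deriv_sub_le h.coeff_nonneg hn.1 (hn.2.trans hzy.le)
    (hf' _ (h.iterate_mem_Ico hz n)) (hf' y ⟨hy0.le, hy1⟩)

lemma tendsto_ntk_div (h : IsDualActivation a f)
    (hf' : ∀ x ∈ Ico (0 : ℝ) 1, HasSum (fun i : ℕ => (i : ℝ) * a i * x ^ (i - 1)) (f' x))
    (hz : z ∈ Ico (0 : ℝ) 1) {k : ℕ → ℝ}
    (hk : ∀ n, k (n + 1) = f^[n + 1] z + k n * f' (f^[n] z)) :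
    Tendsto (fun n : ℕ => k n / (a 1 ^ n * ((n : ℝ) + 1))) atTop
      (𝓝 (koenigsFunction f (a 1) z)) := by
  have hc := h.coeff_one_pos
  have hfactor (n : ℕ) : 1 + (f' (f^[n] z) - a 1) / a 1 = f' (f^[n] z) / a 1 := by
    rw [sub_div, div_self hc.ne', add_sub_cancel]
  have hfactor0 (n : ℕ) : f' (f^[n] z) / a 1 ≠ 0 :=
    (div_pos (hc.trans_le (h.coeff_one_le_deriv hf' (h.iterate_mem_Ico hz n))) hc).ne'
  have hlim := tendsto_inv_smul_of_linear_recurrence (v := fun n => k n / a 1 ^ n)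
    (fun n => by
      rw [hfactor, hk, add_div, smul_eq_mul, div_mul_div_comm, pow_succ', mul_comm (k n)])
    ((h.summable_deriv_iterate_sub hf' hz).div_const (a 1))
    (fun n => by simpa only [hfactor] using hfactor0 n) (h.tendsto_koenigsFunction hz)
  refine hlim.congr fun n => ?_
  rw [smul_eq_mul, inv_mul_eq_div, div_div]

end IsDualActivation

theorem normalized_NTK_converges_to_singular_kernel_general
    (a : ℕ → ℝ) (f f' : ℝ → ℝ) (K : ℕ → ℝ → ℝ)
    (ha : ∀ i, 0 ≤ a i)
    (hf : ∀ z ∈ Ico (0 : ℝ) 1, HasSum (fun i => a i * z ^ i) (f z))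
    (hf' : ∀ z ∈ Ico (0 : ℝ) 1, HasSum (fun i : ℕ => (i : ℝ) * a i * z ^ (i - 1)) (f' z))
    (ha0 : a 0 = 0) (hone : HasSum a 1) (ha1 : 0 < a 1) (ha1' : a 1 < 1)
    (hKrec : ∀ L, ∀ z ∈ Ico (0 : ℝ) 1, K (L + 1) z = f^[L + 1] z + K L z * f' (f^[L] z)) :
    ∃ ψ : ℝ → ℝ,
      (∀ z ∈ Ico (0 : ℝ) 1,
        Tendsto (fun L : ℕ => K L z / (a 1 ^ L * ((L : ℝ) + 1))) atTop (𝓝 (ψ z)) ∧ z ≤ ψ z) ∧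
      (∀ M > (0 : ℝ), ∃ z₀ ∈ Ioo (0 : ℝ) 1, ∀ z ∈ Ioo z₀ 1, M < ψ z) := by
  have h : IsDualActivation a f := ⟨ha, ha0, ha1, ha1', hone, hf⟩
  refine ⟨koenigsFunction f (a 1), fun z hz => ⟨?_, h.self_le_koenigsFunction hz⟩, fun M _ => ?_⟩
  · exact h.tendsto_ntk_div hf' hz fun L => hKrec L z hz
  · have hM := h.tendsto_koenigsFunction_nhdsLT_one.eventually_gt_atTop M
    obtain ⟨z₀, hz₀, hlarge⟩ := (mem_nhdsLT_iff_exists_mem_Ico_Ioo_subset one_half_lt_one).1 hM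
    exact ⟨z₀, ⟨one_half_pos.trans_le hz₀.1, hz₀.2⟩, hlarge⟩

/-- For a dual activation `f(z) = ∑ aᵢ zⁱ` with nonnegative coefficients, `f(0) = 0`,
`f(1) = 1`, `0 < f'(0) = a₁ < 1` and `f'(1) = ∑ i·aᵢ < ∞`, the normalized NTK
`K_L(z)/(a₁^L (L+1))` converges pointwise on `[0,1)` to a finite limit `ψ(z) ≥ z`,
and `ψ` has a singularity at `1`: it exceeds any `M > 0` near `z = 1`. -/
theorem normalized_NTK_converges_to_singular_kernel
    (a : ℕ → ℝ) (f f' : ℝ → ℝ) (K : ℕ → ℝ → ℝ)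
    (ha : ∀ i, 0 ≤ a i)
    (hf : ∀ z ∈ Set.Icc (0 : ℝ) 1, HasSum (fun i => a i * z ^ i) (f z))
    (hf' : ∀ z ∈ Set.Icc (0 : ℝ) 1, HasSum (fun i : ℕ => (i : ℝ) * a i * z ^ (i - 1)) (f' z))
    (ha0 : a 0 = 0) (hone : HasSum a 1)
    (ha1 : 0 < a 1) (ha1' : a 1 < 1)
    (hsum' : Summable (fun i : ℕ => (i : ℝ) * a i))
    (hK0 : ∀ z, K 0 z = z)
    (hKrec : ∀ L z, K (L + 1) z = f^[L + 1] z + K L z * f' (f^[L] z)) :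
    ∃ ψ : ℝ → ℝ,
      (∀ z ∈ Set.Ico (0 : ℝ) 1,
        Tendsto (fun L : ℕ => K L z / (a 1 ^ L * ((L : ℝ) + 1))) atTop (nhds (ψ z)) ∧
        z ≤ ψ z) ∧
      (∀ M > (0 : ℝ), ∃ z₀ ∈ Set.Ioo (0 : ℝ) 1, ∀ z ∈ Set.Ioo z₀ 1, M < ψ z) := by
  exact normalized_NTK_converges_to_singular_kernel_general a f f' K ha
    (fun z hz => hf z (Ico_subset_Icc_self hz)) (fun z hz => hf' z (Ico_subset_Icc_self hz))
    ha0 hone ha1 ha1' fun L z _ => hKrec L z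
end

section
/- Let f be given on [0,1] by a convergent power series f(z) = ∑_{i=0}^∞ a_i z^i with a_i ≥ 0 for all i, satisfying a_0 = 0, ∑_{i≥1} a_i = 1, and 0 < a_1 < 1. Then for every integer i ≥ 0 and every z ∈ [0,1]: a_1^i · z · ∏_{j=0}^{i-1} (1 + (a_2/a_1)·f^[j](z)) ≤ f^[i](z) ≤ a_1^i · z · ∏_{j=0}^{i-1} (1 + (1/a_1 - 1)·f^[j](z)). -/
open Filter Set

/-!
Let `p = a 1`. On `[0, 1]` the series `f z` is at least its truncation `p * z + a 2 * z ^ 2`, and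
at most `p * z + (f 1 - p) * z ^ 2`, the value obtained by moving all the mass of degree at least
`2` down to degree `2`. A bound by `p * z + q * z ^ 2 = p * (1 + q / p * z) * z` is a
multiplicative recursion along the orbit of `z`, which stays in `[0, 1]`, and it telescopes.
-/

theorem apply_iterate_le_mul_prod {α R : Type*} [CommSemiring R] [PartialOrder R]
    [IsOrderedRing R] {f : α → α} {S : Set α} {V c : α → R} (hmaps : MapsTo f S S)
    (hc : ∀ y ∈ S, 0 ≤ c y) (hV : ∀ y ∈ S, V (f y) ≤ c y * V y) {x : α} (hx : x ∈ S) (n : ℕ) :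
    V (f^[n] x) ≤ V x * ∏ j ∈ Finset.range n, c (f^[j] x) := by
  have horbit (j : ℕ) : f^[j] x ∈ S := hmaps.iterate j hx
  have hstep (j : ℕ) : V (f^[j + 1] x) ≤ c (f^[j] x) * V (f^[j] x) + 0 := by
    rw [Function.iterate_succ_apply', add_zero]
    exact hV _ (horbit j)
  simpa using discrete_gronwall_prod_general (u := fun j => V (f^[j] x)) (b := 0)
    (fun j _ => hstep j) (fun j _ => hc _ (horbit j)) n.zero_le

section QuadraticComparison

variable {K : Type*} [Field K] [LinearOrder K] [IsStrictOrderedRing K]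
  {f : K → K} {S : Set K} {p q x : K}

theorem iterate_le_of_le_quadratic (hp : 0 < p) (hq : 0 ≤ q) (hS : ∀ y ∈ S, 0 ≤ y)
    (hmaps : MapsTo f S S) (hf : ∀ y ∈ S, f y ≤ p * y + q * y ^ 2) (hx : x ∈ S) (n : ℕ) :
    f^[n] x ≤ p ^ n * x * ∏ j ∈ Finset.range n, (1 + q / p * f^[j] x) := by
  have hfactor (y : K) (hy : y ∈ S) : 0 ≤ p * (1 + q / p * y) := by
    have := hS y hy
    positivity
  have hstep (y : K) (hy : y ∈ S) : f y ≤ p * (1 + q / p * y) * y :=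
    (hf y hy).trans_eq (by field_simp)
  calc f^[n] x
      ≤ x * ∏ j ∈ Finset.range n, (p * (1 + q / p * f^[j] x)) :=
        apply_iterate_le_mul_prod (V := id) hmaps hfactor hstep hx n
    _ = p ^ n * x * ∏ j ∈ Finset.range n, (1 + q / p * f^[j] x) := by
        rw [Finset.prod_mul_distrib, Finset.prod_const, Finset.card_range]
        ring

theorem le_iterate_of_quadratic_le (hp : 0 < p) (hq : 0 ≤ q) (hS : ∀ y ∈ S, 0 ≤ y)
    (hmaps : MapsTo f S S) (hf : ∀ y ∈ S, p * y + q * y ^ 2 ≤ f y) (hx : x ∈ S) (n : ℕ) :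
    p ^ n * x * ∏ j ∈ Finset.range n, (1 + q / p * f^[j] x) ≤ f^[n] x := by
  have hfactor (y : K) (hy : y ∈ S) : 0 ≤ p * (1 + q / p * y) := by
    have := hS y hy
    positivity
  have hstep (y : K) (hy : y ∈ S) : -f y ≤ p * (1 + q / p * y) * -y := by
    rw [mul_neg, neg_le_neg_iff]
    exact (hf y hy).trans_eq' (by field_simp)
  have hneg : -f^[n] x ≤ -x * ∏ j ∈ Finset.range n, (p * (1 + q / p * f^[j] x)) :=
    apply_iterate_le_mul_prod (V := Neg.neg) hmaps hfactor hstep hx n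
  calc p ^ n * x * ∏ j ∈ Finset.range n, (1 + q / p * f^[j] x)
      = x * ∏ j ∈ Finset.range n, (p * (1 + q / p * f^[j] x)) := by
        rw [Finset.prod_mul_distrib, Finset.prod_const, Finset.card_range]
        ring
    _ ≤ f^[n] x := by rwa [neg_mul, neg_le_neg_iff] at hneg

end QuadraticComparison

section PowerSeries

variable {R : Type*} [Ring R] [PartialOrder R] [IsOrderedRing R] [TopologicalSpace R]
  [IsTopologicalRing R] [OrderClosedTopology R] {a : ℕ → R}

theorem le_sum_range_add_of_hasSum_mul_pow {x s t : R} (m : ℕ) (ha : ∀ i ≥ m, 0 ≤ a i)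
    (hx : x ∈ Icc 0 1) (hs : HasSum a s) (ht : HasSum (fun i => a i * x ^ i) t) :
    t ≤ ∑ i ∈ Finset.range m, a i * x ^ i + (s - ∑ i ∈ Finset.range m, a i) * x ^ m := by
  have tail_le (i : ℕ) : a (i + m) * x ^ (i + m) ≤ a (i + m) * x ^ m :=
    mul_le_mul_of_nonneg_left (pow_le_pow_of_le_one hx.1 hx.2 (Nat.le_add_left m i))
      (ha _ (Nat.le_add_left m i))
  rw [← sub_le_iff_le_add']
  exact hasSum_le tail_le ((hasSum_nat_add_iff' m).2 ht)
    (((hasSum_nat_add_iff' m).2 hs).mul_right (x ^ m))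

theorem mapsTo_Icc_of_hasSum_mul_pow {f : R → R} (ha : ∀ i, 0 ≤ a i)
    (hf : ∀ x ∈ Icc (0 : R) 1, HasSum (fun i => a i * x ^ i) (f x)) (hf1 : f 1 ≤ 1) :
    MapsTo f (Icc 0 1) (Icc 0 1) := by
  intro x hx
  have hmass : HasSum a (f 1) := by simpa using hf 1 (right_mem_Icc.2 zero_le_one)
  have hle : f x ≤ f 1 := by
    simpa using le_sum_range_add_of_hasSum_mul_pow 0 (fun i _ => ha i) hx hmass (hf x hx)
  exact ⟨(hf x hx).nonneg fun i => mul_nonneg (ha i) (pow_nonneg hx.1 i), hle.trans hf1⟩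

end PowerSeries

theorem iterated_dual_activation_bounds_general {K : Type*} [Field K] [LinearOrder K]
    [IsStrictOrderedRing K] [TopologicalSpace K] [OrderTopology K] {a : ℕ → K} {f : K → K}
    (ha : ∀ i, 0 ≤ a i) (hf : ∀ z ∈ Icc (0 : K) 1, HasSum (fun i => a i * z ^ i) (f z))
    (ha0 : a 0 = 0) (hf1 : f 1 ≤ 1) (ha1 : 0 < a 1) (i : ℕ) {z : K} (hz : z ∈ Icc 0 1) :
    a 1 ^ i * z * ∏ j ∈ Finset.range i, (1 + (a 2 / a 1) * f^[j] z) ≤ f^[i] z ∧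
      f^[i] z ≤ a 1 ^ i * z * ∏ j ∈ Finset.range i, (1 + (f 1 / a 1 - 1) * f^[j] z) := by
  have hmass : HasSum a (f 1) := by simpa using hf 1 (right_mem_Icc.2 zero_le_one)
  have hlower (y : K) (hy : y ∈ Icc 0 1) : a 1 * y + a 2 * y ^ 2 ≤ f y := by
    simpa [Finset.sum_range_succ, ha0] using
      sum_le_hasSum (.range 3) (fun i _ => mul_nonneg (ha i) (pow_nonneg hy.1 i)) (hf y hy)
  have hupper (y : K) (hy : y ∈ Icc 0 1) : f y ≤ a 1 * y + (f 1 - a 1) * y ^ 2 := by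
    simpa [Finset.sum_range_succ, ha0] using
      le_sum_range_add_of_hasSum_mul_pow 2 (fun i _ => ha i) hy hmass (hf y hy)
  have hmaps : MapsTo f (Icc 0 1) (Icc 0 1) := mapsTo_Icc_of_hasSum_mul_pow ha hf hf1
  have hmass_tail : 0 ≤ f 1 - a 1 := sub_nonneg.2 (le_hasSum hmass 1 fun i _ => ha i)
  have hratio : (f 1 - a 1) / a 1 = f 1 / a 1 - 1 := by rw [sub_div, div_self ha1.ne']
  rw [← hratio]
  exact ⟨le_iterate_of_quadratic_le ha1 (ha 2) (fun _ hy => hy.1) hmaps hlower hz i,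
    iterate_le_of_le_quadratic ha1 hmass_tail (fun _ hy => hy.1) hmaps hupper hz i⟩

/-- Quadratic/linear bounds on the iterates of a dual activation `f(z) = ∑ aᵢ zⁱ`
(nonnegative coefficients, `f(0)=0`, `f(1)=1`, `0 < a₁ < 1`): for all `i` and `z ∈ [0,1]`,
`a₁^i z ∏_{j<i} (1 + (a₂/a₁) f^[j](z)) ≤ f^[i](z) ≤ a₁^i z ∏_{j<i} (1 + (1/a₁ - 1) f^[j](z))`. -/
theorem iterated_dual_activation_bounds
    (a : ℕ → ℝ) (f : ℝ → ℝ)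
    (ha : ∀ i, 0 ≤ a i)
    (hf : ∀ z ∈ Set.Icc (0 : ℝ) 1, HasSum (fun i => a i * z ^ i) (f z))
    (ha0 : a 0 = 0) (hone : HasSum a 1)
    (ha1 : 0 < a 1) (ha1' : a 1 < 1) :
    ∀ (i : ℕ), ∀ z ∈ Set.Icc (0 : ℝ) 1,
      a 1 ^ i * z * ∏ j ∈ Finset.range i, (1 + (a 2 / a 1) * f^[j] z) ≤ f^[i] z ∧
      f^[i] z ≤ a 1 ^ i * z * ∏ j ∈ Finset.range i, (1 + (1 / a 1 - 1) * f^[j] z) := by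
  have hf1 : f 1 = 1 := (hf 1 (right_mem_Icc.2 zero_le_one)).unique (by simpa using hone)
  intro i z hz
  simpa only [hf1] using iterated_dual_activation_bounds_general ha hf ha0 hf1.le ha1 i hz
end

section
/- Let f be given on [0,1] by a convergent power series f(z) = ∑_{i=0}^∞ a_i z^i with a_i ≥ 0 for all i, satisfying a_0 = 0, ∑_{i≥1} a_i = 1, 0 < a_1 < 1, and C := ∑_i i·a_i < ∞ (so C = f'(1) ≥ 1). Then for every integer L ≥ 0 and every z ∈ [0,1]: (L+1)·a_1^L · z · ∏_{j=0}^{L-1} (1 + (a_2/a_1)·f^[j](z)) ≤ K_L(z) ≤ (L+1)·a_1^L · z · ∏_{j=0}^{L-1} (1 + (C/a_1 - 1)·f^[j](z)). -/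
open Filter Set

/-!
Unfolding the recursion writes `K_L(z)` as the sum of the `L + 1` terms
`f^[k](z) * ∏ j ∈ [k, L), f'(f^[j](z))`. If `w * ρ(w) ≤ f(w)` and `0 ≤ ρ(w) ≤ f'(w)` on `[0, 1]`,
then each of these terms is at least `z * ∏ j < L, ρ(f^[j](z))`, and likewise with the inequalities
reversed. For the lower bound, `ρ(w) = a₁ + a₂ w` by truncating the two series. For the upper bound,
`ρ(w) = a₁ + (C - a₁) w` is the chord of the convex function `f'` over `[0, 1]`, while
`f(w) ≤ w * f'(w)` holds termwise because `a₀ = 0`.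
-/

section Recursion

variable {R : Type*} [CommSemiring R] {κ x d r : ℕ → R}

lemma eq_sum_mul_prod_Ico_of_succ_eq (hκ0 : κ 0 = x 0)
    (hκ : ∀ n, κ (n + 1) = x (n + 1) + κ n * d n) (n : ℕ) :
    κ n = ∑ k ∈ Finset.range (n + 1), x k * ∏ j ∈ Finset.Ico k n, d j := by
  induction n with
  | zero => simp [hκ0]
  | succ n ih =>
    have hprod : ∀ k ∈ Finset.range (n + 1),
        x k * ∏ j ∈ Finset.Ico k (n + 1), d j = (x k * ∏ j ∈ Finset.Ico k n, d j) * d n :=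
      fun k hk => by
        rw [Finset.prod_Ico_succ_top (Finset.mem_range_succ_iff.1 hk), mul_assoc]
    rw [Finset.sum_range_succ, Finset.sum_congr rfl hprod, ← Finset.sum_mul, ← ih, hκ,
      Finset.Ico_self, Finset.prod_empty, mul_one, add_comm]

variable [PartialOrder R] [IsOrderedRing R]

lemma mul_prod_range_le_of_mul_le_succ (hr : ∀ n, 0 ≤ r n) (hx : ∀ n, x n * r n ≤ x (n + 1))
    (n : ℕ) : x 0 * ∏ j ∈ Finset.range n, r j ≤ x n := by
  induction n with
  | zero => simp
  | succ n ih =>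
    rw [Finset.prod_range_succ, ← mul_assoc]
    exact (mul_le_mul_of_nonneg_right ih (hr n)).trans (hx n)

lemma succ_mul_prod_range_le_of_succ_eq (hx0 : 0 ≤ x 0) (hr : ∀ n, 0 ≤ r n)
    (hx : ∀ n, x n * r n ≤ x (n + 1)) (hd : ∀ n, r n ≤ d n) (hκ0 : κ 0 = x 0)
    (hκ : ∀ n, κ (n + 1) = x (n + 1) + κ n * d n) (n : ℕ) :
    (n + 1) * (x 0 * ∏ j ∈ Finset.range n, r j) ≤ κ n := by
  have hprod_le (k : ℕ) : x 0 * ∏ j ∈ Finset.range k, r j ≤ x k :=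
    mul_prod_range_le_of_mul_le_succ hr hx k
  have hx_nonneg (k : ℕ) : 0 ≤ x k :=
    (mul_nonneg hx0 (Finset.prod_nonneg fun j _ => hr j)).trans (hprod_le k)
  have hterm : ∀ k ∈ Finset.range (n + 1),
      x 0 * ∏ j ∈ Finset.range n, r j ≤ x k * ∏ j ∈ Finset.Ico k n, d j := fun k hk => by
    rw [← Finset.prod_range_mul_prod_Ico r (Finset.mem_range_succ_iff.1 hk), ← mul_assoc]
    exact mul_le_mul (hprod_le k) (Finset.prod_le_prod (fun j _ => hr j) fun j _ => hd j)
      (Finset.prod_nonneg fun j _ => hr j) (hx_nonneg k)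
  rw [eq_sum_mul_prod_Ico_of_succ_eq hκ0 hκ]
  simpa using Finset.card_nsmul_le_sum _ _ _ hterm

lemma le_succ_mul_prod_range_of_succ_eq (hx0 : 0 ≤ x 0) (hd0 : ∀ n, 0 ≤ d n)
    (hx : ∀ n, x (n + 1) ≤ x n * r n) (hd : ∀ n, d n ≤ r n) (hκ0 : κ 0 = x 0)
    (hκ : ∀ n, κ (n + 1) = x (n + 1) + κ n * d n) (n : ℕ) :
    κ n ≤ (n + 1) * (x 0 * ∏ j ∈ Finset.range n, r j) := by
  have hr (j : ℕ) : 0 ≤ r j := (hd0 j).trans (hd j)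
  have hle_prod (k : ℕ) : x k ≤ x 0 * ∏ j ∈ Finset.range k, r j := by
    simpa using discrete_gronwall_prod_general (b := 0) (fun n _ => by simpa [mul_comm] using hx n)
      (fun n _ => hr n) k.zero_le
  have hterm : ∀ k ∈ Finset.range (n + 1),
      x k * ∏ j ∈ Finset.Ico k n, d j ≤ x 0 * ∏ j ∈ Finset.range n, r j := fun k hk => by
    rw [← Finset.prod_range_mul_prod_Ico r (Finset.mem_range_succ_iff.1 hk), ← mul_assoc]
    exact mul_le_mul (hle_prod k) (Finset.prod_le_prod (fun j _ => hd0 j) fun j _ => hd j)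
      (Finset.prod_nonneg fun j _ => hd0 j)
      (mul_nonneg hx0 (Finset.prod_nonneg fun j _ => hr j))
  rw [eq_sum_mul_prod_Ico_of_succ_eq hκ0 hκ]
  simpa using Finset.sum_le_card_nsmul _ _ _ hterm

end Recursion

lemma pow_mul_prod_range_one_add_div_mul {F : Type*} [Field F] {b : F} (hb : b ≠ 0) (c : F)
    (x : ℕ → F) (n : ℕ) :
    b ^ n * ∏ j ∈ Finset.range n, (1 + c / b * x j) = ∏ j ∈ Finset.range n, (b + c * x j) :=
  calc
    b ^ n * ∏ j ∈ Finset.range n, (1 + c / b * x j)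
        = ∏ j ∈ Finset.range n, b * (1 + c / b * x j) := by
      rw [← Finset.pow_card_mul_prod, Finset.card_range]
    _ = ∏ j ∈ Finset.range n, (b + c * x j) :=
      Finset.prod_congr rfl fun j _ => by field_simp

section PowerSeries

variable {a : ℕ → ℝ} {w s t S C : ℝ}

lemma hasSum_pow_mem_Icc (ha : ∀ i, 0 ≤ a i) (hS : HasSum a S) (hw : w ∈ Icc (0 : ℝ) 1)
    (hs : HasSum (fun i => a i * w ^ i) s) : s ∈ Icc 0 S :=
  ⟨hs.nonneg fun i => mul_nonneg (ha i) (pow_nonneg hw.1 i),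
    hasSum_le (fun i => mul_le_of_le_one_right (ha i) (pow_le_one₀ hw.1 hw.2)) hs hS⟩

lemma mul_add_mul_le_hasSum_pow (ha : ∀ i, 0 ≤ a i) (hw : 0 ≤ w)
    (hs : HasSum (fun i => a i * w ^ i) s) : w * (a 1 + a 2 * w) ≤ s :=
  calc
    w * (a 1 + a 2 * w) = ∑ i ∈ {1, 2}, a i * w ^ i := by
      rw [Finset.sum_pair (by norm_num)]
      ring
    _ ≤ s := sum_le_hasSum _ (fun i _ => mul_nonneg (ha i) (pow_nonneg hw i)) hs

lemma hasSum_pow_le_chord (ha : ∀ i, 0 ≤ a i) (hS : HasSum a S) (hw : w ∈ Icc (0 : ℝ) 1)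
    (hs : HasSum (fun i => a i * w ^ i) s) : s ≤ a 0 + (S - a 0) * w := by
  have hs_tail : HasSum (fun i => a (i + 1) * w ^ (i + 1)) (s - a 0) := by
    simpa using (hasSum_nat_add_iff' 1).2 hs
  have hS_tail : HasSum (fun i => a (i + 1)) (S - a 0) := by
    simpa using (hasSum_nat_add_iff' 1).2 hS
  have htail : s - a 0 ≤ (S - a 0) * w :=
    hasSum_le (fun i => mul_le_mul_of_nonneg_left
      (pow_le_of_le_one hw.1 hw.2 i.succ_ne_zero) (ha _)) hs_tail (hS_tail.mul_right w)
  linarith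

lemma hasSum_deriv_nonneg (ha : ∀ i, 0 ≤ a i) (hw : 0 ≤ w)
    (ht : HasSum (fun i : ℕ => (i : ℝ) * a i * w ^ (i - 1)) t) : 0 ≤ t :=
  ht.nonneg fun i => mul_nonneg (mul_nonneg i.cast_nonneg (ha i)) (pow_nonneg hw _)

lemma add_two_mul_mul_le_hasSum_deriv (ha : ∀ i, 0 ≤ a i) (hw : 0 ≤ w)
    (ht : HasSum (fun i : ℕ => (i : ℝ) * a i * w ^ (i - 1)) t) : a 1 + 2 * a 2 * w ≤ t :=
  calc
    a 1 + 2 * a 2 * w = ∑ i ∈ ({1, 2} : Finset ℕ), (i : ℝ) * a i * w ^ (i - 1) := by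
      simp
    _ ≤ t := sum_le_hasSum _
      (fun i _ => mul_nonneg (mul_nonneg i.cast_nonneg (ha i)) (pow_nonneg hw _)) ht

lemma add_mul_le_hasSum_deriv (ha : ∀ i, 0 ≤ a i) (hw : 0 ≤ w)
    (ht : HasSum (fun i : ℕ => (i : ℝ) * a i * w ^ (i - 1)) t) : a 1 + a 2 * w ≤ t := by
  linarith [add_two_mul_mul_le_hasSum_deriv ha hw ht, mul_nonneg (ha 2) hw]

lemma hasSum_deriv_le_chord (ha : ∀ i, 0 ≤ a i)
    (hC : HasSum (fun i : ℕ => (i : ℝ) * a i) C) (hw : w ∈ Icc (0 : ℝ) 1)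
    (ht : HasSum (fun i : ℕ => (i : ℝ) * a i * w ^ (i - 1)) t) : t ≤ a 1 + (C - a 1) * w := by
  have hC_succ : HasSum (fun i : ℕ => ((i + 1 : ℕ) : ℝ) * a (i + 1)) C := by
    simpa using (hasSum_nat_add_iff' 1).2 hC
  have ht_succ : HasSum (fun i : ℕ => ((i + 1 : ℕ) : ℝ) * a (i + 1) * w ^ i) t := by
    simpa using (hasSum_nat_add_iff' 1).2 ht
  simpa using hasSum_pow_le_chord (fun i => mul_nonneg (Nat.cast_nonneg _) (ha (i + 1)))
    hC_succ hw ht_succ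

lemma hasSum_pow_le_mul_hasSum_deriv (ha : ∀ i, 0 ≤ a i) (ha0 : a 0 = 0) (hw : 0 ≤ w)
    (hs : HasSum (fun i => a i * w ^ i) s)
    (ht : HasSum (fun i : ℕ => (i : ℝ) * a i * w ^ (i - 1)) t) : s ≤ w * t := by
  refine hasSum_le (fun i => ?_) hs (ht.mul_left w)
  cases i with
  | zero => simp [ha0]
  | succ i =>
    calc
      a (i + 1) * w ^ (i + 1) ≤ ((i + 1 : ℕ) : ℝ) * (a (i + 1) * w ^ (i + 1)) :=
        le_mul_of_one_le_left (mul_nonneg (ha _) (pow_nonneg hw _))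
          (Nat.one_le_cast.2 i.succ_pos)
      _ = w * (((i + 1 : ℕ) : ℝ) * a (i + 1) * w ^ (i + 1 - 1)) := by
        rw [Nat.add_sub_cancel, pow_succ]
        ring

lemma hasSum_pow_le_mul_add_mul (ha : ∀ i, 0 ≤ a i) (ha0 : a 0 = 0)
    (hC : HasSum (fun i : ℕ => (i : ℝ) * a i) C) (hw : w ∈ Icc (0 : ℝ) 1)
    (hs : HasSum (fun i => a i * w ^ i) s)
    (ht : HasSum (fun i : ℕ => (i : ℝ) * a i * w ^ (i - 1)) t) :
    s ≤ w * (a 1 + (C - a 1) * w) :=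
  (hasSum_pow_le_mul_hasSum_deriv ha ha0 hw.1 hs ht).trans
    (mul_le_mul_of_nonneg_left (hasSum_deriv_le_chord ha hC hw ht) hw.1)

end PowerSeries

/-- Bounds on the depth-`L` NTK `K_L` of a dual activation `f(z) = ∑ aᵢ zⁱ`
(nonnegative coefficients, `f(0)=0`, `f(1)=1`, `0 < a₁ < 1`, `C = f'(1) = ∑ i·aᵢ < ∞`):
for all `L` and `z ∈ [0,1]`,
`(L+1) a₁^L z ∏_{j<L} (1 + (a₂/a₁) f^[j](z)) ≤ K_L(z)
  ≤ (L+1) a₁^L z ∏_{j<L} (1 + (C/a₁ - 1) f^[j](z))`. -/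
theorem NTK_product_bounds
    (a : ℕ → ℝ) (f f' : ℝ → ℝ) (K : ℕ → ℝ → ℝ) (C : ℝ)
    (ha : ∀ i, 0 ≤ a i)
    (hf : ∀ z ∈ Set.Icc (0 : ℝ) 1, HasSum (fun i => a i * z ^ i) (f z))
    (hf' : ∀ z ∈ Set.Icc (0 : ℝ) 1, HasSum (fun i : ℕ => (i : ℝ) * a i * z ^ (i - 1)) (f' z))
    (ha0 : a 0 = 0) (hone : HasSum a 1)
    (ha1 : 0 < a 1) (ha1' : a 1 < 1)
    (hC : HasSum (fun i : ℕ => (i : ℝ) * a i) C)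
    (hK0 : ∀ z, K 0 z = z)
    (hKrec : ∀ L z, K (L + 1) z = f^[L + 1] z + K L z * f' (f^[L] z)) :
    ∀ (L : ℕ), ∀ z ∈ Set.Icc (0 : ℝ) 1,
      ((L : ℝ) + 1) * a 1 ^ L * z * ∏ j ∈ Finset.range L, (1 + (a 2 / a 1) * f^[j] z)
          ≤ K L z ∧
      K L z ≤ ((L : ℝ) + 1) * a 1 ^ L * z * ∏ j ∈ Finset.range L, (1 + (C / a 1 - 1) * f^[j] z) := by
  intro L z hz
  have hmem (n : ℕ) : f^[n] z ∈ Icc (0 : ℝ) 1 :=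
    MapsTo.iterate (fun w hw => hasSum_pow_mem_Icc ha hone hw (hf w hw)) n hz
  have hprod (c : ℝ) : (L + 1) * a 1 ^ L * z * ∏ j ∈ Finset.range L, (1 + c / a 1 * f^[j] z)
      = (L + 1) * (z * ∏ j ∈ Finset.range L, (a 1 + c * f^[j] z)) := by
    rw [← pow_mul_prod_range_one_add_div_mul ha1.ne' c]
    ring
  rw [div_sub_one ha1.ne', hprod, hprod]
  have hpos (n : ℕ) : 0 ≤ f^[n] z := (hmem n).1
  have hx (n : ℕ) : HasSum (fun i => a i * (f^[n] z) ^ i) (f^[n + 1] z) := by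
    simpa only [Function.iterate_succ_apply'] using hf _ (hmem n)
  have hd (n : ℕ) : HasSum (fun i : ℕ => (i : ℝ) * a i * (f^[n] z) ^ (i - 1)) (f' (f^[n] z)) :=
    hf' _ (hmem n)
  constructor
  · exact succ_mul_prod_range_le_of_succ_eq (κ := (K · z)) (x := (f^[·] z)) hz.1
      (fun n => add_nonneg (ha 1) (mul_nonneg (ha 2) (hpos n)))
      (fun n => mul_add_mul_le_hasSum_pow ha (hpos n) (hx n))
      (fun n => add_mul_le_hasSum_deriv ha (hpos n) (hd n)) (hK0 z) (hKrec · z) L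
  · exact le_succ_mul_prod_range_of_succ_eq (κ := (K · z)) (x := (f^[·] z)) hz.1
      (fun n => hasSum_deriv_nonneg ha (hpos n) (hd n))
      (fun n => hasSum_pow_le_mul_add_mul ha ha0 hC (hmem n) (hx n) (hd n))
      (fun n => hasSum_deriv_le_chord ha hC (hmem n) (hd n)) (hK0 z) (hKrec · z) L
end

section
/- Let f be given on [0,1] by a convergent power series f(z) = ∑_{i=0}^∞ a_i z^i with a_i ≥ 0 for all i, satisfying a_0 = a_1 = 0 (f(0) = 0 and f'(0) = 0), a_2 > 0, ∑_{i≥2} a_i = 1 (f(1) = 1), and ∑_i i·a_i < ∞ (f'(1) < ∞). Then for every L ≥ 0 there exists a function g_L that is positive and monotonically increasing on (0,1] such that K_L(z) = z^{2^L}·g_L(z) for all z ∈ (0,1]; consequently, for all z', z with 0 < z' < z ≤ 1, lim_{L→∞} K_L(z')/K_L(z) = 0. -/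
open Filter Set

/-!
Functions of the form `z ^ n * g z` with `g` positive and monotone are closed under sums, products
and composition, with exponents behaving like degrees. Nonnegative power series with no terms of
degree below `n` are of this form, so `f` has exponent `n` and `f'` has exponent `n - 1`. By
induction both summands in the recursion for `K (L + 1)` have exponent `n ^ (L + 1)`, since
`n ^ L + n ^ L * (n - 1) = n ^ (L + 1)`. Monotonicity of the cofactor then bounds
`K L z' / K L z` by `(z' / z) ^ n ^ L`.
-/

/-- On `s`, the function `h` is the monomial `z ^ n` times a positive monotone cofactor. This is the
shape in which `K L` is to be factored; `n` need not be the exact order of vanishing at `0`, as the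
cofactor may tend to `0` there. -/
def HasMonotoneCofactorOn {R : Type*} [CommSemiring R] [PartialOrder R]
    (h : R → R) (n : ℕ) (s : Set R) : Prop :=
  ∃ g : R → R, (∀ z ∈ s, 0 < g z) ∧ MonotoneOn g s ∧ ∀ z ∈ s, h z = z ^ n * g z

namespace HasMonotoneCofactorOn

section OrderedSemiring

variable {R : Type*} [CommSemiring R] [PartialOrder R] [IsStrictOrderedRing R]
  {h k : R → R} {m n : ℕ} {s t : Set R}

protected theorem id : HasMonotoneCofactorOn (id : R → R) 1 s :=
  ⟨fun _ => 1, fun _ _ => one_pos, monotoneOn_const, fun z _ => by simp⟩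

theorem pos (hh : HasMonotoneCofactorOn h n s) (hs : s ⊆ Ioi 0) {z : R} (hz : z ∈ s) :
    0 < h z := by
  obtain ⟨g, g_pos, -, h_eq⟩ := hh
  rw [h_eq z hz]
  exact mul_pos (pow_pos (hs hz) n) (g_pos z hz)

theorem monotoneOn (hh : HasMonotoneCofactorOn h n s) (hs : s ⊆ Ici 0) : MonotoneOn h s := by
  obtain ⟨g, g_pos, g_mono, h_eq⟩ := hh
  intro x hx y hy hxy
  rw [h_eq x hx, h_eq y hy]
  exact mul_le_mul (pow_le_pow_left₀ (hs hx) hxy n) (g_mono hx hy hxy) (g_pos x hx).le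
    (pow_nonneg (hs hy) n)

theorem mapsTo_Ioc {c d : R} (hh : HasMonotoneCofactorOn h n (Ioc 0 c)) (hc : 0 < c)
    (hd : h c ≤ d) : MapsTo h (Ioc 0 c) (Ioc 0 d) := fun _ hz =>
  ⟨hh.pos (fun _ hx => hx.1) hz,
    (hh.monotoneOn (fun _ hx => hx.1.le) hz (right_mem_Ioc.2 hc) hz.2).trans hd⟩

theorem add (hh : HasMonotoneCofactorOn h n s) (hk : HasMonotoneCofactorOn k n s) :
    HasMonotoneCofactorOn (h + k) n s := by
  obtain ⟨p, p_pos, p_mono, h_eq⟩ := hh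
  obtain ⟨q, q_pos, q_mono, k_eq⟩ := hk
  exact ⟨p + q, fun z hz => add_pos (p_pos z hz) (q_pos z hz), p_mono.add q_mono,
    fun z hz => by simp only [Pi.add_apply, h_eq z hz, k_eq z hz, mul_add]⟩

theorem mul (hh : HasMonotoneCofactorOn h m s) (hk : HasMonotoneCofactorOn k n s) :
    HasMonotoneCofactorOn (h * k) (m + n) s := by
  obtain ⟨p, p_pos, p_mono, h_eq⟩ := hh
  obtain ⟨q, q_pos, q_mono, k_eq⟩ := hk
  refine ⟨p * q, fun z hz => mul_pos (p_pos z hz) (q_pos z hz),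
    fun x hx y hy hxy => ?_, fun z hz => ?_⟩
  · exact mul_le_mul (p_mono hx hy hxy) (q_mono hx hy hxy) (q_pos x hx).le (p_pos y hy).le
  · simp only [Pi.mul_apply, h_eq z hz, k_eq z hz, pow_add, mul_mul_mul_comm]

theorem comp (hh : HasMonotoneCofactorOn h m t) (hk : HasMonotoneCofactorOn k n s)
    (hs : s ⊆ Ici 0) (hmaps : MapsTo k s t) : HasMonotoneCofactorOn (h ∘ k) (n * m) s := by
  have k_mono := hk.monotoneOn hs
  obtain ⟨p, p_pos, p_mono, h_eq⟩ := hh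
  obtain ⟨q, q_pos, q_mono, k_eq⟩ := hk
  refine ⟨fun z => q z ^ m * p (k z),
    fun z hz => mul_pos (pow_pos (q_pos z hz) m) (p_pos _ (hmaps hz)),
    fun x hx y hy hxy => ?_, fun z hz => ?_⟩
  · exact mul_le_mul (pow_le_pow_left₀ (q_pos x hx).le (q_mono hx hy hxy) m)
      (p_mono (hmaps hx) (hmaps hy) (k_mono hx hy hxy)) (p_pos _ (hmaps hx)).le
      (pow_pos (q_pos y hy) m).le
  · calc h (k z) = k z ^ m * p (k z) := h_eq _ (hmaps hz)
      _ = (z ^ n * q z) ^ m * p (k z) := by rw [← k_eq z hz]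
      _ = z ^ (n * m) * (q z ^ m * p (k z)) := by rw [mul_pow, ← pow_mul, mul_assoc]

theorem iterate (hh : HasMonotoneCofactorOn h n s) (hs : s ⊆ Ici 0) (hmaps : MapsTo h s s)
    (L : ℕ) : HasMonotoneCofactorOn h^[L] (n ^ L) s := by
  induction L with
  | zero => exact .id
  | succ L ih =>
    rw [Function.iterate_succ', pow_succ]
    exact hh.comp ih hs (hmaps.iterate L)

theorem ntk {f f' : R → R} {K : ℕ → R → R} (hf : HasMonotoneCofactorOn f (n + 1) s)
    (hf' : HasMonotoneCofactorOn f' n s) (hs : s ⊆ Ici 0) (hmaps : MapsTo f s s)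
    (hK0 : ∀ z, K 0 z = z)
    (hKrec : ∀ L z, K (L + 1) z = f^[L + 1] z + K L z * f' (f^[L] z)) (L : ℕ) :
    HasMonotoneCofactorOn (K L) ((n + 1) ^ L) s := by
  induction L with
  | zero =>
    rw [funext hK0]
    exact .id
  | succ L ih =>
    have hprod := ih.mul (hf'.comp (hf.iterate hs hmaps L) hs (hmaps.iterate L))
    have hexp : (n + 1) ^ L + (n + 1) ^ L * n = (n + 1) ^ (L + 1) := by ring
    rw [hexp] at hprod
    rw [funext (hKrec L)]
    exact (hf.iterate hs hmaps (L + 1)).add hprod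

end OrderedSemiring

section OrderedField

variable {𝕜 : Type*} [Field 𝕜] [LinearOrder 𝕜] [IsStrictOrderedRing 𝕜] {s : Set 𝕜}

theorem div_le_div_pow {h : 𝕜 → 𝕜} {n : ℕ} (hh : HasMonotoneCofactorOn h n s) (hs : s ⊆ Ici 0)
    {x y : 𝕜} (hx : x ∈ s) (hy : y ∈ s) (hxy : x ≤ y) : h x / h y ≤ (x / y) ^ n := by
  obtain ⟨g, g_pos, g_mono, h_eq⟩ := hh
  rw [h_eq x hx, h_eq y hy, mul_div_mul_comm, ← div_pow]
  exact mul_le_of_le_one_right (pow_nonneg (div_nonneg (hs hx) (hs hy)) n)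
    ((div_le_one (g_pos y hy)).2 (g_mono hx hy hxy))

variable [TopologicalSpace 𝕜] [OrderTopology 𝕜]

theorem of_hasSum {ι : Type*} {b : ι → 𝕜} {e : ι → ℕ}
    {h : 𝕜 → 𝕜} {n : ℕ} (hb : ∀ i, 0 ≤ b i) (hb_pos : ∃ j, 0 < b j)
    (he : ∀ i, b i ≠ 0 → n ≤ e i) (hs : s ⊆ Ioi 0)
    (hsum : ∀ z ∈ s, HasSum (fun i => b i * z ^ e i) (h z)) : HasMonotoneCofactorOn h n s := by
  have hcofactor : ∀ z ∈ s, HasSum (fun i => b i * z ^ (e i - n)) (h z / z ^ n) := by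
    intro z hz
    convert (hsum z hz).div_const (z ^ n) using 2 with i
    by_cases hi : b i = 0
    · simp only [hi, zero_mul, zero_div]
    · rw [pow_sub₀ z (hs hz).ne' (he i hi), mul_div_assoc, div_eq_mul_inv]
  obtain ⟨j, hj⟩ := hb_pos
  refine ⟨fun z => h z / z ^ n, fun z hz => ?_, fun x hx y hy hxy => ?_, fun z hz => ?_⟩
  · exact (mul_pos hj (pow_pos (hs hz) _)).trans_le
      (le_hasSum (hcofactor z hz) j fun i _ => mul_nonneg (hb i) (pow_pos (hs hz) _).le)
  · exact hasSum_le (fun i => mul_le_mul_of_nonneg_left (pow_le_pow_left₀ (hs hx).le hxy _) (hb i))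
      (hcofactor x hx) (hcofactor y hy)
  · exact (mul_div_cancel₀ (h z) (pow_pos (hs hz) n).ne').symm

theorem tendsto_div_nhds_zero [Archimedean 𝕜] {ι : Type*} {l : Filter ι}
    {h : ι → 𝕜 → 𝕜} {n : ι → ℕ} (hh : ∀ i, HasMonotoneCofactorOn (h i) (n i) s)
    (hn : Tendsto n l atTop) (hs : s ⊆ Ioi 0) {x y : 𝕜} (hx : x ∈ s) (hy : y ∈ s) (hxy : x < y) :
    Tendsto (fun i => h i x / h i y) l (nhds 0) := by
  have hpow : Tendsto (fun i => (x / y) ^ n i) l (nhds 0) :=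
    (tendsto_pow_atTop_nhds_zero_of_lt_one (div_pos (hs hx) (hs hy)).le
      ((div_lt_one (hs hy)).2 hxy)).comp hn
  exact tendsto_of_tendsto_of_tendsto_of_le_of_le tendsto_const_nhds hpow
    (fun i => (div_pos ((hh i).pos hs hx) ((hh i).pos hs hy)).le)
    (fun i => (hh i).div_le_div_pow (hs.trans Ioi_subset_Ici_self) hx hy hxy.le)

end OrderedField

end HasMonotoneCofactorOn

theorem NTK_one_nearest_neighbor_factorization_general
    {a : ℕ → ℝ} {f f' : ℝ → ℝ} {K : ℕ → ℝ → ℝ} {n : ℕ} (hn : n ≠ 0)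
    (ha : ∀ i, 0 ≤ a i) (ha_lt : ∀ i < n, a i = 0)
    (hf : ∀ z ∈ Ioc (0 : ℝ) 1, HasSum (fun i => a i * z ^ i) (f z))
    (hf' : ∀ z ∈ Ioc (0 : ℝ) 1, HasSum (fun i : ℕ => (i : ℝ) * a i * z ^ (i - 1)) (f' z))
    (hf_one : f 1 ∈ Ioc (0 : ℝ) 1)
    (hK0 : ∀ z, K 0 z = z)
    (hKrec : ∀ L z, K (L + 1) z = f^[L + 1] z + K L z * f' (f^[L] z)) :
    (∀ L : ℕ, HasMonotoneCofactorOn (K L) (n ^ L) (Ioc 0 1)) ∧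
    (1 < n → ∀ z' z : ℝ, 0 < z' → z' < z → z ≤ 1 →
      Tendsto (fun L : ℕ => K L z' / K L z) atTop (nhds 0)) := by
  obtain ⟨m, rfl⟩ := Nat.exists_eq_succ_of_ne_zero hn
  have hpos : Ioc (0 : ℝ) 1 ⊆ Ioi 0 := Ioc_subset_Ioi_self
  have hle : ∀ i, a i ≠ 0 → m + 1 ≤ i := fun i hi => not_lt.1 fun hlt => hi (ha_lt i hlt)
  obtain ⟨j, hj⟩ : ∃ j, 0 < a j := by
    by_contra! ha_nonpos
    have hsum : HasSum a (f 1) := by simpa using hf 1 (right_mem_Ioc.2 one_pos)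
    exact hf_one.1.not_ge (hasSum_le ha_nonpos hsum hasSum_zero)
  have hfF : HasMonotoneCofactorOn f (m + 1) (Ioc 0 1) := .of_hasSum ha ⟨j, hj⟩ hle hpos hf
  have hfF' : HasMonotoneCofactorOn f' m (Ioc 0 1) :=
    .of_hasSum (fun i => mul_nonneg i.cast_nonneg (ha i))
      ⟨j, mul_pos (Nat.cast_pos.2 (m.succ_pos.trans_le (hle j hj.ne'))) hj⟩
      (fun i hi => Nat.le_sub_one_of_lt (hle i (right_ne_zero_of_mul hi))) hpos hf'
  have hK := hfF.ntk hfF' (hpos.trans Ioi_subset_Ici_self) (hfF.mapsTo_Ioc one_pos hf_one.2)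
    hK0 hKrec
  exact ⟨hK, fun hm z' z hz' hlt hz => HasMonotoneCofactorOn.tendsto_div_nhds_zero hK
    (tendsto_pow_atTop_atTop_of_one_lt hm) hpos ⟨hz', hlt.le.trans hz⟩ ⟨hz'.trans hlt, hz⟩ hlt⟩

/-- For a dual activation `f(z) = ∑ aᵢ zⁱ` with nonnegative coefficients,
`f(0) = f'(0) = 0` (i.e. `a₀ = a₁ = 0`), `a₂ > 0`, `f(1) = 1`, and `f'(1) < ∞`,
the depth-`L` NTK factors as `K_L(z) = z^{2^L}·g_L(z)` on `(0,1]` with `g_L` positive and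
monotonically increasing; consequently `K_L(z')/K_L(z) → 0` whenever `0 < z' < z ≤ 1`. -/
theorem NTK_one_nearest_neighbor_factorization
    (a : ℕ → ℝ) (f f' : ℝ → ℝ) (K : ℕ → ℝ → ℝ)
    (ha : ∀ i, 0 ≤ a i)
    (hf : ∀ z ∈ Set.Icc (0 : ℝ) 1, HasSum (fun i => a i * z ^ i) (f z))
    (hf' : ∀ z ∈ Set.Icc (0 : ℝ) 1, HasSum (fun i : ℕ => (i : ℝ) * a i * z ^ (i - 1)) (f' z))
    (ha0 : a 0 = 0) (ha1 : a 1 = 0) (ha2 : 0 < a 2) (hone : HasSum a 1)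
    (hsum' : Summable (fun i : ℕ => (i : ℝ) * a i))
    (hK0 : ∀ z, K 0 z = z)
    (hKrec : ∀ L z, K (L + 1) z = f^[L + 1] z + K L z * f' (f^[L] z)) :
    (∀ L : ℕ, ∃ g : ℝ → ℝ,
      (∀ z ∈ Set.Ioc (0 : ℝ) 1, 0 < g z) ∧ MonotoneOn g (Set.Ioc 0 1) ∧
      ∀ z ∈ Set.Ioc (0 : ℝ) 1, K L z = z ^ (2 ^ L) * g z) ∧
    (∀ z' z : ℝ, 0 < z' → z' < z → z ≤ 1 →
      Tendsto (fun L : ℕ => K L z' / K L z) atTop (nhds 0)) := by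
  have hf_one : f 1 = 1 := (hf 1 (right_mem_Icc.2 zero_le_one)).unique (by simpa using hone)
  have ha_lt : ∀ i < 2, a i = 0 := fun i hi => by interval_cases i <;> assumption
  have ⟨hK, hlim⟩ := NTK_one_nearest_neighbor_factorization_general two_ne_zero ha ha_lt
    (fun z hz => hf z (Ioc_subset_Icc_self hz)) (fun z hz => hf' z (Ioc_subset_Icc_self hz))
    (by simp [hf_one]) hK0 hKrec
  exact ⟨hK, hlim one_lt_two⟩
end

section
/- Let n ≥ 1, let y ∈ {-1,1}^n with ∑_{i=1}^n y_i ≠ 0, and let C_1, C_2 ∈ ℝ with 0 < C_1 < C_2. Let C : ℕ → ℝ with C(L) > 0 for all L, let (G_L)_{L∈ℕ} be a sequence of real n×n matrices and (v_L)_{L∈ℕ} a sequence of vectors in ℝ^n such that, as L → ∞: (G_L)_{ij}/C(L) → C_1 for all i ≠ j, (G_L)_{ii}/C(L) → C_2 for all i, and (v_L)_i/C(L) → C_1 for all i. Then for all sufficiently large L the matrix G_L is invertible, lim_{L→∞} y·G_L^{-1}·v_L = (C_1/(C_2 - C_1 + C_1·n))·∑_{i=1}^n y_i, and consequently lim_{L→∞}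 sign(y·G_L^{-1}·v_L) = sign(∑_{i=1}^n y_i). That is, the limiting kernel machine classifier is the majority vote classifier. -/
open Filter Set Matrix

/-!
After division by `C L`, the system `G_L u = v_L` converges to `M u = C₁ 𝟙`, where `M` has diagonal
entries `C₂` and off-diagonal entries `C₁`, and the scaling cancels in `G_L⁻¹ v_L`. The constant
vectors are eigenvectors of `M` for the eigenvalue `C₂ - C₁ + C₁ n`, and on the vectors of sum
zero `M` acts as `C₂ - C₁`. So `M` is invertible and `M⁻¹ (C₁ 𝟙)` is a constant vector: every label
gets the same weight, which is positive.
-/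

section Equicorrelated

variable {ι R : Type*} [DecidableEq ι]

/-- The equicorrelated (compound symmetric) matrix, with off-diagonal entries `a` and diagonal
entries `b`: the limit of the normalized Gram matrices. -/
def equicorrelated (ι : Type*) [DecidableEq ι] (a b : R) : Matrix ι ι R :=
  Matrix.of fun i j => if i = j then b else a

variable [Fintype ι]

theorem equicorrelated_mulVec [NonUnitalNonAssocRing R] (a b : R) (x : ι → R) :
    equicorrelated ι a b *ᵥ x = fun i => (b - a) * x i + a * ∑ j, x j := by
  ext i
  have entry_mul (j : ι) :
      (if i = j then b else a) * x j = (if i = j then (b - a) * x j else 0) + a * x j := by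
    split_ifs <;> simp [sub_mul]
  simp [equicorrelated, mulVec, dotProduct, entry_mul, Finset.sum_add_distrib, Finset.mul_sum]

theorem equicorrelated_mulVec_const [CommRing R] (a b c : R) :
    equicorrelated ι a b *ᵥ (fun _ => c) = fun _ => (b - a + a * Fintype.card ι) * c := by
  ext i
  simp only [equicorrelated_mulVec, Finset.sum_const, Finset.card_univ, nsmul_eq_mul]
  ring

theorem sum_equicorrelated_mulVec [CommRing R] (a b : R) (x : ι → R) :
    ∑ i, (equicorrelated ι a b *ᵥ x) i = (b - a + a * Fintype.card ι) * ∑ i, x i := by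
  simp only [equicorrelated_mulVec, Finset.sum_add_distrib, ← Finset.mul_sum, Finset.sum_const,
    Finset.card_univ, nsmul_eq_mul]
  ring

theorem det_equicorrelated_ne_zero [CommRing R] [IsDomain R] {a b : R} (hab : a ≠ b)
    (hcard : b - a + a * Fintype.card ι ≠ 0) : (equicorrelated ι a b).det ≠ 0 := by
  intro hdet
  obtain ⟨x, hx, hker⟩ := exists_mulVec_eq_zero_iff.2 hdet
  have hsum : ∑ i, x i = 0 := by
    have h := sum_equicorrelated_mulVec a b x
    simp only [hker, Pi.zero_apply, Finset.sum_const_zero] at h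
    exact (mul_eq_zero.1 h.symm).resolve_left hcard
  refine hx (funext fun i => ?_)
  have hi := congrFun hker i
  simp only [equicorrelated_mulVec, hsum, mul_zero, add_zero, Pi.zero_apply] at hi
  exact (mul_eq_zero.1 hi).resolve_left (sub_ne_zero.2 hab.symm)

theorem equicorrelated_inv_mulVec_const {K : Type*} [Field K] {a b : K} (hab : a ≠ b)
    (hcard : b - a + a * Fintype.card ι ≠ 0) (c : K) :
    (equicorrelated ι a b)⁻¹ *ᵥ (fun _ => c) = fun _ => c / (b - a + a * Fintype.card ι) := by
  have hsolve : equicorrelated ι a b *ᵥ (fun _ => c / (b - a + a * Fintype.card ι)) =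
      fun _ => c := by
    simp only [equicorrelated_mulVec_const, mul_div_cancel₀ _ hcard]
  have hunit := (det_equicorrelated_ne_zero hab hcard).isUnit
  rw [← hsolve, mulVec_mulVec, nonsing_inv_mul _ hunit, one_mulVec]

end Equicorrelated

theorem inv_smul_mulVec_smul {ι R : Type*} [Fintype ι] [DecidableEq ι] [CommRing R]
    (c : Rˣ) (A : Matrix ι ι R) (w : ι → R) : (c • A)⁻¹ *ᵥ (c • w) = A⁻¹ *ᵥ w := by
  by_cases hA : IsUnit A.det
  · rw [Matrix.inv_smul' A c hA, smul_mulVec, mulVec_smul, inv_smul_smul]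
  · have hcA : ¬IsUnit (c • A).det := by
      rwa [← isUnit_iff_isUnit_det, isUnit_smul_iff, isUnit_iff_isUnit_det]
    rw [nonsing_inv_apply_not_isUnit A hA, nonsing_inv_apply_not_isUnit _ hcA, zero_mulVec,
      zero_mulVec]

section Limits

variable {α ι K : Type*} [DecidableEq ι] [Field K] [TopologicalSpace K] {l : Filter α}

theorem tendsto_inv_smul_equicorrelated {a b : K} {c : α → K} {A : α → Matrix ι ι K}
    (hoff : ∀ i j, i ≠ j → Tendsto (fun x => A x i j / c x) l (nhds a))
    (hdiag : ∀ i, Tendsto (fun x => A x i i / c x) l (nhds b)) :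
    Tendsto (fun x => (c x)⁻¹ • A x) l (nhds (equicorrelated ι a b)) := by
  refine tendsto_pi_nhds.2 fun i => tendsto_pi_nhds.2 fun j => ?_
  obtain rfl | hij := eq_or_ne i j
  · simpa [equicorrelated, div_eq_inv_mul] using hdiag i
  · simpa [equicorrelated, hij, div_eq_inv_mul] using hoff i j hij

variable [Fintype ι] {c : α → K} {A : α → Matrix ι ι K} {M : Matrix ι ι K}

theorem eventually_isUnit_det_of_tendsto_smul [IsTopologicalRing K] [T1Space K]
    (hA : Tendsto (fun x => c x • A x) l (nhds M)) (hM : M.det ≠ 0) :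
    ∀ᶠ x in l, IsUnit (A x).det := by
  have hdet : Tendsto (fun x => (c x • A x).det) l (nhds M.det) :=
    (continuous_id.matrix_det.tendsto M).comp hA
  filter_upwards [hdet.eventually_ne hM] with x hx
  rw [det_smul] at hx
  exact (right_ne_zero_of_mul hx).isUnit

theorem tendsto_inv_mulVec_of_tendsto_smul [IsTopologicalDivisionRing K]
    {w : α → ι → K} {b : ι → K} (hc : ∀ᶠ x in l, c x ≠ 0)
    (hA : Tendsto (fun x => c x • A x) l (nhds M))
    (hw : Tendsto (fun x => c x • w x) l (nhds b)) (hM : M.det ≠ 0) :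
    Tendsto (fun x => (A x)⁻¹ *ᵥ w x) l (nhds (M⁻¹ *ᵥ b)) := by
  have hinv : Tendsto (fun x => (c x • A x)⁻¹) l (nhds M⁻¹) := by
    refine (continuousAt_matrix_inv M ?_).tendsto.comp hA
    rw [Ring.inverse_eq_inv']
    exact continuousAt_inv₀ hM
  have hmulVec : Continuous fun p : Matrix ι ι K × (ι → K) => p.1 *ᵥ p.2 :=
    continuous_fst.matrix_mulVec continuous_snd
  refine ((hmulVec.tendsto (M⁻¹, b)).comp (hinv.prodMk_nhds hw)).congr' ?_
  filter_upwards [hc] with x hx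
  exact inv_smul_mulVec_smul (Units.mk0 (c x) hx) (A x) (w x)

end Limits

theorem real_sign_eq_coe_sign (r : ℝ) : Real.sign r = (SignType.sign r : ℝ) := by
  obtain hr | rfl | hr := lt_trichotomy r 0
  · simp [Real.sign_of_neg hr, sign_neg hr]
  · simp
  · simp [Real.sign_of_pos hr, sign_pos hr]

theorem real_sign_mul_of_pos {r : ℝ} (hr : 0 < r) (s : ℝ) :
    Real.sign (r * s) = Real.sign s := by
  simp only [real_sign_eq_coe_sign, sign_mul, sign_pos hr, one_mul]

theorem continuousAt_real_sign {r : ℝ} (hr : r ≠ 0) : ContinuousAt Real.sign r := by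
  rw [funext real_sign_eq_coe_sign]
  have hcoe : Continuous fun s : SignType => (s : ℝ) := continuous_of_discreteTopology
  exact hcoe.continuousAt.comp (continuousAt_sign_of_ne_zero hr)

theorem limiting_kernel_machine_is_majority_vote_general {α ι : Type*} [Fintype ι]
    [DecidableEq ι] {l : Filter α} (y : ι → ℝ) (hysum : ∑ i, y i ≠ 0) {C1 C2 : ℝ}
    (hC12 : C1 ≠ C2) (hweight : 0 < C1 / (C2 - C1 + C1 * Fintype.card ι))
    {C : α → ℝ} (hC : ∀ᶠ x in l, C x ≠ 0) {G : α → Matrix ι ι ℝ} {v : α → ι → ℝ}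
    (hGoff : ∀ i j, i ≠ j → Tendsto (fun x => G x i j / C x) l (nhds C1))
    (hGdiag : ∀ i, Tendsto (fun x => G x i i / C x) l (nhds C2))
    (hv : ∀ i, Tendsto (fun x => v x i / C x) l (nhds C1)) :
    (∀ᶠ x in l, IsUnit (G x).det) ∧
    Tendsto (fun x => y ⬝ᵥ ((G x)⁻¹ *ᵥ v x)) l
      (nhds ((C1 / (C2 - C1 + C1 * Fintype.card ι)) * ∑ i, y i)) ∧
    Tendsto (fun x => Real.sign (y ⬝ᵥ ((G x)⁻¹ *ᵥ v x))) l (nhds (Real.sign (∑ i, y i))) := by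
  have hcard : C2 - C1 + C1 * Fintype.card ι ≠ 0 := (div_ne_zero_iff.1 hweight.ne').2
  have hdet := det_equicorrelated_ne_zero hC12 hcard
  have hG := tendsto_inv_smul_equicorrelated hGoff hGdiag
  have hw : Tendsto (fun x => (C x)⁻¹ • v x) l (nhds fun _ => C1) :=
    tendsto_pi_nhds.2 fun i => by simpa [div_eq_inv_mul] using hv i
  have hsolution := tendsto_inv_mulVec_of_tendsto_smul (hC.mono fun _ => inv_ne_zero) hG hw hdet
  have hlim : Tendsto (fun x => y ⬝ᵥ ((G x)⁻¹ *ᵥ v x)) l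
      (nhds ((C1 / (C2 - C1 + C1 * Fintype.card ι)) * ∑ i, y i)) := by
    have hvote : y ⬝ᵥ ((equicorrelated ι C1 C2)⁻¹ *ᵥ fun _ => C1) =
        (C1 / (C2 - C1 + C1 * Fintype.card ι)) * ∑ i, y i := by
      rw [equicorrelated_inv_mulVec_const hC12 hcard, dotProduct, ← Finset.sum_mul, mul_comm]
    have hdot : Continuous fun u : ι → ℝ => y ⬝ᵥ u := continuous_const.dotProduct continuous_id
    rw [← hvote]
    exact (hdot.tendsto _).comp hsolution
  refine ⟨eventually_isUnit_det_of_tendsto_smul hG hdet, hlim, ?_⟩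
  rw [← real_sign_mul_of_pos hweight]
  exact (continuousAt_real_sign (mul_ne_zero hweight.ne' hysum)).tendsto.comp hlim

/-- Proposition 1 of the paper (finite-diagonal-limit case): if the normalized Gram matrices
have off-diagonal entries tending to `C₁`, diagonal entries tending to `C₂ > C₁ > 0`, and test
vector entries tending to `C₁`, then for all large `L` the Gram matrix is invertible,
`y G_L⁻¹ v_L → (C₁/(C₂ - C₁ + C₁ n)) ∑ yᵢ`, and hence the limiting kernel machine classifier
is the majority vote classifier `sign(∑ yᵢ)`. -/
theorem limiting_kernel_machine_is_majority_vote
    (n : ℕ) (hn : 1 ≤ n) (y : Fin n → ℝ) (hy : ∀ i, y i = 1 ∨ y i = -1)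
    (hysum : ∑ i, y i ≠ 0)
    (C1 C2 : ℝ) (hC1 : 0 < C1) (hC12 : C1 < C2)
    (C : ℕ → ℝ) (hC : ∀ L, 0 < C L)
    (G : ℕ → Matrix (Fin n) (Fin n) ℝ) (v : ℕ → Fin n → ℝ)
    (hGoff : ∀ i j, i ≠ j → Tendsto (fun L => G L i j / C L) atTop (nhds C1))
    (hGdiag : ∀ i, Tendsto (fun L => G L i i / C L) atTop (nhds C2))
    (hv : ∀ i, Tendsto (fun L => v L i / C L) atTop (nhds C1)) :
    (∃ L₀ : ℕ, ∀ L ≥ L₀, IsUnit (G L).det) ∧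
    Tendsto (fun L : ℕ => y ⬝ᵥ ((G L)⁻¹ *ᵥ v L)) atTop
      (nhds ((C1 / (C2 - C1 + C1 * (n : ℝ))) * ∑ i, y i)) ∧
    Tendsto (fun L : ℕ => Real.sign (y ⬝ᵥ ((G L)⁻¹ *ᵥ v L))) atTop
      (nhds (Real.sign (∑ i, y i))) := by
  have hweight : 0 < C1 / (C2 - C1 + C1 * (Fintype.card (Fin n) : ℝ)) :=
    div_pos hC1 (add_pos_of_pos_of_nonneg (sub_pos.2 hC12) (by positivity))
  simpa only [Fintype.card_fin, eventually_atTop] using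
    limiting_kernel_machine_is_majority_vote_general y hysum hC12.ne hweight
      (.of_forall fun L => (hC L).ne') hGoff hGdiag hv
end

section
/- Let f be given on [0,1] by a convergent power series f(z) = ∑_{i=0}^∞ a_i z^i with a_i ≥ 0 for all i, satisfying a_0 > 0 (f(0) > 0), ∑_i a_i = 1 (f(1) = 1), and 1 < ∑_i i·a_i < ∞ (1 < f'(1) < ∞). Then there exists a unique c ∈ (0,1) with f(c) = c; this c satisfies f'(c) < 1; and for every z ∈ [0,1), the iterates converge: lim_{L→∞} f^[L](z) = c. -/
open Filter Set

/-!
A power series with nonnegative coefficients is monotone on `[0, 1]`, and strictly convex there once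
it has a nonzero coefficient of degree at least `2`, which `f'(1) > f(1)` forces. The graph of `f`
starts above the diagonal (`f 0 > 0`) and lies below it just to the left of `1` (`f 1 = 1` and
`f'(1) > 1`), so it crosses the diagonal at some `c`. A strictly convex function which is at most
the identity at two points is strictly less than the identity between them; comparing with the
fixed point `1`, this makes the crossing unique, with `x < f x` on `[0, c)` and `f x < x` on
`(c, 1)`. Monotonicity of `f` then makes every orbit monotone and traps it on its side of `c`.
-/

section Iterate

open Function Topology

lemma isFixedPt_of_tendsto_iterate_of_continuousWithinAt {X : Type*} [TopologicalSpace X]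
    [T2Space X] {f : X → X} {s : Set X} {x y : X} (hf : ContinuousWithinAt f s y)
    (hx : ∀ n, f^[n] x ∈ s) (hy : Tendsto (fun n ↦ f^[n] x) atTop (𝓝 y)) : IsFixedPt f y := by
  refine tendsto_nhds_unique ((tendsto_add_atTop_iff_nat 1).1 ?_) hy
  simp only [iterate_succ' f]
  exact hf.tendsto.comp (tendsto_nhdsWithin_iff.2 ⟨hy, .of_forall hx⟩)

variable {α : Type*} [ConditionallyCompleteLinearOrder α] [TopologicalSpace α] [OrderTopology α]
  {f : α → α} {c z : α}

lemma tendsto_iterate_of_lt_map (hcont : ContinuousOn f (Icc z c))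
    (hmono : MonotoneOn f (Icc z c)) (hzc : z ≤ c) (hfc : IsFixedPt f c)
    (hlt : ∀ x ∈ Ico z c, x < f x) : Tendsto (fun n ↦ f^[n] z) atTop (𝓝 c) := by
  have hle : ∀ x ∈ Icc z c, x ≤ f x := fun x hx ↦
    hx.2.eq_or_lt.elim (fun h ↦ h ▸ hfc.ge) fun h ↦ (hlt x ⟨hx.1, h⟩).le
  have hmaps : MapsTo f (Icc z c) (Icc z c) := fun x hx ↦
    ⟨hx.1.trans (hle x hx), (hmono hx (right_mem_Icc.2 hzc) hx.2).trans_eq hfc⟩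
  have horbit : ∀ n, f^[n] z ∈ Icc z c := fun n ↦ hmaps.iterate n (left_mem_Icc.2 hzc)
  have horbit_mono : Monotone fun n ↦ f^[n] z := monotone_nat_of_le_succ fun n ↦ by
    rw [iterate_succ_apply']
    exact hle _ (horbit n)
  have hlim := tendsto_atTop_ciSup horbit_mono ⟨c, forall_mem_range.2 fun n ↦ (horbit n).2⟩
  have hmem := isClosed_Icc.mem_of_tendsto hlim (.of_forall horbit)
  have hfix := isFixedPt_of_tendsto_iterate_of_continuousWithinAt (hcont _ hmem) horbit hlim
  have hsup : ⨆ n, f^[n] z = c :=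
    hmem.2.eq_or_lt.resolve_right fun h ↦ (hlt _ ⟨hmem.1, h⟩).ne' hfix
  rwa [hsup] at hlim

lemma tendsto_iterate_of_map_lt (hcont : ContinuousOn f (Icc c z))
    (hmono : MonotoneOn f (Icc c z)) (hcz : c ≤ z) (hfc : IsFixedPt f c)
    (hlt : ∀ x ∈ Ioc c z, f x < x) : Tendsto (fun n ↦ f^[n] z) atTop (𝓝 c) :=
  tendsto_iterate_of_lt_map (α := αᵒᵈ) (hcont.mono fun _ hx ↦ hx.symm)
    (fun _ hx _ hy hxy ↦ hmono hy.symm hx.symm hxy) hcz hfc fun x hx ↦ hlt x hx.symm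

lemma exists_mem_Ioo_isFixedPt [DenselyOrdered α] {p q : α}
    (hcont : ContinuousOn f (Icc p q)) (hpq : p ≤ q) (hp : p < f p) (hq : f q < q) :
    ∃ c ∈ Ioo p q, IsFixedPt f c := by
  obtain ⟨c, hc, hfc⟩ := exists_mem_Icc_isFixedPt hcont hpq hp.le hq.le
  refine ⟨c, ⟨hc.1.lt_of_ne ?_, hc.2.lt_of_ne ?_⟩, hfc⟩
  · rintro rfl
    exact hp.ne' hfc
  · rintro rfl
    exact hq.ne hfc

end Iterate

section StrictConvex

open Function Topology

section LinearOrderedField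

variable {𝕜 : Type*} [Field 𝕜] [LinearOrder 𝕜] [IsStrictOrderedRing 𝕜] {f : 𝕜 → 𝕜} {s : Set 𝕜}
  {x y z c q : 𝕜}

lemma map_lt_self_of_strictConvexOn (hf : StrictConvexOn 𝕜 s f) (hx : x ∈ s) (hz : z ∈ s)
    (hfx : f x ≤ x) (hfz : f z ≤ z) (hy : y ∈ Ioo x z) : f y < y := by
  have hxz : x < z := hy.1.trans hy.2
  have hsub : StrictConvexOn 𝕜 s fun t ↦ f t - t := hf.sub_concaveOn (concaveOn_id hf.1)
  have hlt : f y - y < max (f x - x) (f z - z) :=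
    hsub.lt_on_openSegment hx hz hxz.ne (by rwa [openSegment_eq_Ioo hxz])
  exact sub_neg.1 (hlt.trans_le (max_le (sub_nonpos.2 hfx) (sub_nonpos.2 hfz)))

lemma lt_map_of_strictConvexOn (hf : StrictConvexOn 𝕜 s f) (hx : x ∈ s) (hq : q ∈ s)
    (hfc : IsFixedPt f c) (hfq : f q ≤ q) (hc : c ∈ Ioo x q) : x < f x := by
  by_contra! hfx
  exact (map_lt_self_of_strictConvexOn hf hx hq hfx hfq hc).ne hfc

lemma eq_of_isFixedPt_of_strictConvexOn (hf : StrictConvexOn 𝕜 s f) (hx : x ∈ s) (hy : y ∈ s)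
    (hq : q ∈ s) (hfx : IsFixedPt f x) (hfy : IsFixedPt f y) (hfq : f q ≤ q) (hxq : x < q)
    (hyq : y < q) : x = y := by
  rcases lt_trichotomy x y with h | h | h
  · exact absurd hfx (lt_map_of_strictConvexOn hf hx hq hfy hfq ⟨h, hyq⟩).ne'
  · exact h
  · exact absurd hfy (lt_map_of_strictConvexOn hf hy hq hfx hfq ⟨h, hxq⟩).ne'

end LinearOrderedField

variable {f : ℝ → ℝ} {s : Set ℝ} {z c p q : ℝ}

lemma hasDerivAt_lt_one_of_strictConvexOn {f' : ℝ} (hf : StrictConvexOn ℝ s f) (hc : c ∈ s)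
    (hq : q ∈ s) (hfc : IsFixedPt f c) (hfq : f q ≤ q) (hcq : c < q) (hf' : HasDerivAt f f' c) :
    f' < 1 := by
  refine (hf.lt_slope_of_hasDerivAt hc hq hcq hf').trans_le ?_
  rw [slope_def_field, hfc.eq, div_le_one (sub_pos.2 hcq)]
  exact sub_le_sub_right hfq c

lemma tendsto_iterate_of_strictConvexOn (hf : StrictConvexOn ℝ (Icc p q) f)
    (hcont : ContinuousOn f (Icc p q)) (hmono : MonotoneOn f (Icc p q)) (hc : c ∈ Ico p q)
    (hfc : IsFixedPt f c) (hfq : f q ≤ q) (hz : z ∈ Ico p q) :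
    Tendsto (fun n ↦ f^[n] z) atTop (𝓝 c) := by
  have hq : q ∈ Icc p q := right_mem_Icc.2 (hz.1.trans hz.2.le)
  rcases le_total z c with hzc | hcz
  · have hsub : Icc z c ⊆ Icc p q := Icc_subset_Icc hz.1 hc.2.le
    exact tendsto_iterate_of_lt_map (hcont.mono hsub) (hmono.mono hsub) hzc hfc fun x hx ↦
      lt_map_of_strictConvexOn hf (hsub (Ico_subset_Icc_self hx)) hq hfc hfq ⟨hx.2, hc.2⟩
  · have hsub : Icc c z ⊆ Icc p q := Icc_subset_Icc hc.1 hz.2.le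
    exact tendsto_iterate_of_map_lt (hcont.mono hsub) (hmono.mono hsub) hcz hfc fun x hx ↦
      map_lt_self_of_strictConvexOn hf (Ico_subset_Icc_self hc) hq hfc.le hfq
        ⟨hx.1, hx.2.trans_lt hz.2⟩

lemma exists_unique_attracting_fixedPt_of_strictConvexOn {f' : ℝ → ℝ} {w : ℝ}
    (hf : StrictConvexOn ℝ (Icc p q) f) (hcont : ContinuousOn f (Icc p q))
    (hmono : MonotoneOn f (Icc p q)) (hf' : ∀ x ∈ Ioo p q, HasDerivAt f (f' x) x)
    (hfp : p < f p) (hfq : f q ≤ q) (hw : w ∈ Ioo p q) (hfw : f w < w) :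
    ∃ c ∈ Ioo p q, f c = c ∧ (∀ c' ∈ Ioo p q, f c' = c' → c' = c) ∧ f' c < 1 ∧
      ∀ z ∈ Ico p q, Tendsto (fun n ↦ f^[n] z) atTop (𝓝 c) := by
  have hsub : Ioo p q ⊆ Icc p q := Ioo_subset_Icc_self
  have hq : q ∈ Icc p q := right_mem_Icc.2 (hw.1.trans hw.2).le
  obtain ⟨c, hcw, hfc⟩ :=
    exists_mem_Ioo_isFixedPt (hcont.mono (Icc_subset_Icc_right hw.2.le)) hw.1.le hfp hfw
  have hc : c ∈ Ioo p q := ⟨hcw.1, hcw.2.trans hw.2⟩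
  refine ⟨c, hc, hfc, fun c' hc' hfc' ↦ ?_, ?_, fun z hz ↦ ?_⟩
  · exact eq_of_isFixedPt_of_strictConvexOn hf (hsub hc') (hsub hc) hq hfc' hfc hfq hc'.2 hc.2
  · exact hasDerivAt_lt_one_of_strictConvexOn hf (hsub hc) hq hfc hfq hc.2 (hf' c hc)
  · exact tendsto_iterate_of_strictConvexOn hf hcont hmono (Ioo_subset_Ico_self hc) hfc hfq hz

end StrictConvex

section PowerSeries

open Topology

variable {a : ℕ → ℝ} {f f' : ℝ → ℝ} {s : Set ℝ} {r : ℝ}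

lemma monotoneOn_of_hasSum_pow (ha : ∀ i, 0 ≤ a i) (hs : s ⊆ Ici 0)
    (hf : ∀ z ∈ s, HasSum (fun i ↦ a i * z ^ i) (f z)) : MonotoneOn f s := fun x hx y hy hxy ↦
  hasSum_le (fun i ↦ mul_le_mul_of_nonneg_left (pow_le_pow_left₀ (hs hx) hxy i) (ha i))
    (hf x hx) (hf y hy)

lemma strictConvexOn_of_hasSum_pow (ha : ∀ i, 0 ≤ a i) {m : ℕ} (hm : 2 ≤ m) (ham : 0 < a m)
    (hconv : Convex ℝ s) (hs : s ⊆ Ici 0)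
    (hf : ∀ z ∈ s, HasSum (fun i ↦ a i * z ^ i) (f z)) : StrictConvexOn ℝ s f := by
  refine ⟨hconv, fun x hx y hy hxy u v hu hv huv ↦ ?_⟩
  have hcomb := ((hf x hx).const_smul u).add ((hf y hy).const_smul v)
  have hterm (i : ℕ) :
      u • (a i * x ^ i) + v • (a i * y ^ i) = a i * (u • x ^ i + v • y ^ i) := by
    simp only [smul_eq_mul]
    ring
  simp only [hterm] at hcomb
  refine hasSum_lt (i := m) (fun i ↦ ?_) ?_ (hf _ (hconv hx hy hu.le hv.le huv)) hcomb
  · exact mul_le_mul_of_nonneg_left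
      ((convexOn_pow i).2 (hs hx) (hs hy) hu.le hv.le huv) (ha i)
  · exact mul_lt_mul_of_pos_left ((strictConvexOn_pow hm).2 (hs hx) (hs hy) hxy hu hv huv) ham

lemma continuousOn_Icc_of_hasSum_pow (hf : ∀ z ∈ Icc 0 r, HasSum (fun i ↦ a i * z ^ i) (f z)) :
    ContinuousOn f (Icc 0 r) := by
  rcases lt_or_ge r 0 with hr | hr
  · simp [Icc_eq_empty hr.not_ge]
  refine (continuousOn_tsum (f := fun i z ↦ a i * z ^ i) (fun i ↦ by fun_prop)
    (hf r (right_mem_Icc.2 hr)).summable.norm fun i z hz ↦ ?_).congr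
    fun z hz ↦ (hf z hz).tsum_eq.symm
  simp only [norm_mul, norm_pow, Real.norm_of_nonneg hz.1, Real.norm_of_nonneg hr]
  gcongr
  exacts [hz.1, hz.2]

lemma hasDerivAt_of_hasSum_pow (hf : ∀ z ∈ Ioo 0 r, HasSum (fun i ↦ a i * z ^ i) (f z))
    (hf' : ∀ z ∈ Ioo 0 r, HasSum (fun i : ℕ ↦ (i : ℝ) * a i * z ^ (i - 1)) (f' z)) {z : ℝ}
    (hz : z ∈ Ioo 0 r) : HasDerivAt f (f' z) z := by
  obtain ⟨t, hzt, htr⟩ := exists_between hz.2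
  have ht : t ∈ Ioo 0 r := ⟨hz.1.trans hzt, htr⟩
  have hzt' : z ∈ Ioo 0 t := ⟨hz.1, hzt⟩
  have hbound (i : ℕ) (y : ℝ) (hy : y ∈ Ioo 0 t) :
      ‖(i : ℝ) * a i * y ^ (i - 1)‖ ≤ ‖(i : ℝ) * a i * t ^ (i - 1)‖ := by
    simp only [norm_mul, norm_pow, Real.norm_of_nonneg hy.1.le, Real.norm_of_nonneg ht.1.le]
    gcongr
    exacts [hy.1.le, hy.2.le]
  have hderiv (i : ℕ) (y : ℝ) (_ : y ∈ Ioo 0 t) :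
      HasDerivAt (fun w ↦ a i * w ^ i) (i * a i * y ^ (i - 1)) y :=
    ((hasDerivAt_pow i y).const_mul (a i)).congr_deriv (by ring)
  have htsum := hasDerivAt_tsum_of_isPreconnected (hf' t ht).summable.norm isOpen_Ioo
    isPreconnected_Ioo hderiv hbound hzt' (hf z hz).summable hzt'
  rw [(hf' z hz).tsum_eq] at htsum
  refine htsum.congr_of_eventuallyEq ?_
  filter_upwards [Ioo_mem_nhds hz.1 hz.2] with y hy using (hf y hy).tsum_eq.symm

lemma eventually_mul_one_sub_lt_sub (ha : ∀ i, 0 ≤ a i)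
    (hf : ∀ z ∈ Ioc 0 1, HasSum (fun i ↦ a i * z ^ i) (f z)) {b : ℝ} {t : Finset ℕ}
    (hb : b < ∑ i ∈ t, i * a i) : ∀ᶠ w in 𝓝[<] 1, b * (1 - w) < f 1 - f w := by
  -- `f 1 - f w = (1 - w) * ∑ aᵢ (1 + w + ⋯ + w ^ (i - 1))`, and `t` truncates the last sum.
  let g (w : ℝ) : ℝ := ∑ i ∈ t, a i * ∑ j ∈ Finset.range i, w ^ j
  have hg : Continuous g := by fun_prop
  have hg1 : b < g 1 := by simpa [g, mul_comm] using hb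
  filter_upwards [nhdsWithin_le_nhds (hg.continuousAt.eventually_const_lt hg1),
    Ioo_mem_nhdsLT zero_lt_one] with w hgw hw
  have hsub : HasSum (fun i ↦ a i * 1 ^ i - a i * w ^ i) (f 1 - f w) :=
    (hf 1 ⟨zero_lt_one, le_rfl⟩).sub (hf w (Ioo_subset_Ioc_self hw))
  have hnonneg (i : ℕ) : 0 ≤ a i * 1 ^ i - a i * w ^ i := by
    rw [one_pow, ← mul_sub]
    exact mul_nonneg (ha i) (sub_nonneg.2 (pow_le_one₀ hw.1.le hw.2.le))
  calc
    b * (1 - w) < g w * (1 - w) := mul_lt_mul_of_pos_right hgw (sub_pos.2 hw.2)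
    _ = ∑ i ∈ t, (a i * 1 ^ i - a i * w ^ i) := by
      rw [Finset.sum_mul]
      refine Finset.sum_congr rfl fun i _ ↦ ?_
      rw [mul_assoc, mul_comm _ (1 - w), mul_neg_geom_sum, one_pow, mul_sub]
    _ ≤ f 1 - f w := sum_le_hasSum t (fun i _ ↦ hnonneg i) hsub

end PowerSeries

lemma exists_two_le_pos_of_sum_lt_sum_mul {a : ℕ → ℝ} (ha : ∀ i, 0 ≤ a i) {t : Finset ℕ}
    (h : ∑ i ∈ t, a i < ∑ i ∈ t, i * a i) : ∃ m, 2 ≤ m ∧ 0 < a m := by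
  obtain ⟨m, -, hm⟩ := Finset.exists_lt_of_sum_lt h
  have ham : 0 < a m := (ha m).lt_of_ne fun h0 ↦ by simp [← h0] at hm
  exact ⟨m, by exact_mod_cast (lt_mul_iff_one_lt_left ham).1 hm, ham⟩

lemma exists_lt_sum_of_lt_tsum_ofReal {ι : Type*} {g : ι → ℝ} (hg : ∀ i, 0 ≤ g i) {b : ℝ}
    (hb : ENNReal.ofReal b < ∑' i, ENNReal.ofReal (g i)) : ∃ t : Finset ι, b < ∑ i ∈ t, g i := by
  rw [ENNReal.tsum_eq_iSup_sum, lt_iSup_iff] at hb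
  obtain ⟨t, ht⟩ := hb
  rw [← ENNReal.ofReal_sum_of_nonneg fun i _ ↦ hg i] at ht
  exact ⟨t, (ENNReal.ofReal_lt_ofReal_iff'.1 ht).1⟩

/-- The last hypothesis says `1 < f'(1) ≤ ∞`: the sum is taken in `[0, ∞]`, so that it keeps its
meaning when `∑ i·aᵢ` diverges. -/
theorem chaotic_phase_unique_attracting_fixed_point_general
    (a : ℕ → ℝ) (f f' : ℝ → ℝ)
    (ha : ∀ i, 0 ≤ a i)
    (hf : ∀ z ∈ Icc (0 : ℝ) 1, HasSum (fun i ↦ a i * z ^ i) (f z))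
    (hf' : ∀ z ∈ Ioo (0 : ℝ) 1, HasSum (fun i : ℕ ↦ (i : ℝ) * a i * z ^ (i - 1)) (f' z))
    (ha0 : 0 < a 0) (hone : HasSum a 1)
    (hslope : 1 < ∑' i : ℕ, ENNReal.ofReal (i * a i)) :
    ∃ c ∈ Ioo (0 : ℝ) 1, f c = c ∧
      (∀ c' ∈ Ioo (0 : ℝ) 1, f c' = c' → c' = c) ∧
      f' c < 1 ∧
      (∀ z ∈ Ico (0 : ℝ) 1, Tendsto (fun L : ℕ ↦ f^[L] z) atTop (nhds c)) := by
  have hf1 : f 1 = 1 := (hf 1 (right_mem_Icc.2 zero_le_one)).unique (by simpa using hone)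
  have hf0 : 0 < f 0 := ha0.trans_le <| by
    simpa using le_hasSum (hf 0 (left_mem_Icc.2 zero_le_one)) 0 fun i _ ↦
      mul_nonneg (ha i) (pow_nonneg le_rfl i)
  obtain ⟨t, ht⟩ := exists_lt_sum_of_lt_tsum_ofReal (g := fun i : ℕ ↦ i * a i)
    (fun i ↦ mul_nonneg i.cast_nonneg (ha i)) (by rwa [ENNReal.ofReal_one])
  obtain ⟨m, hm, ham⟩ := exists_two_le_pos_of_sum_lt_sum_mul ha
    ((sum_le_hasSum t (fun i _ ↦ ha i) hone).trans_lt ht)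
  obtain ⟨w, hdrop, hw⟩ := ((eventually_mul_one_sub_lt_sub ha
    (fun z hz ↦ hf z (Ioc_subset_Icc_self hz)) ht).and (Ioo_mem_nhdsLT zero_lt_one)).exists
  exact exists_unique_attracting_fixedPt_of_strictConvexOn
    (strictConvexOn_of_hasSum_pow ha hm ham (convex_Icc 0 1) Icc_subset_Ici_self hf)
    (continuousOn_Icc_of_hasSum_pow hf) (monotoneOn_of_hasSum_pow ha Icc_subset_Ici_self hf)
    (fun _ ↦ hasDerivAt_of_hasSum_pow (fun z hz ↦ hf z (Ioo_subset_Icc_self hz)) hf')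
    hf0 hf1.le hw (by linarith)

/-- For a dual activation `f(z) = ∑ aᵢ zⁱ` with nonnegative coefficients, `f(0) = a₀ > 0`,
`f(1) = 1`, and `1 < f'(1) = ∑ i·aᵢ < ∞` (the chaotic phase), there is a unique fixed point
`c ∈ (0,1)` of `f`; it satisfies `f'(c) < 1`; and the iterates `f^[L](z)` converge to `c`
for every `z ∈ [0,1)`. -/
theorem chaotic_phase_unique_attracting_fixed_point
    (a : ℕ → ℝ) (f f' : ℝ → ℝ) (C : ℝ)
    (ha : ∀ i, 0 ≤ a i)
    (hf : ∀ z ∈ Set.Icc (0 : ℝ) 1, HasSum (fun i => a i * z ^ i) (f z))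
    (hf' : ∀ z ∈ Set.Icc (0 : ℝ) 1, HasSum (fun i : ℕ => (i : ℝ) * a i * z ^ (i - 1)) (f' z))
    (ha0 : 0 < a 0) (hone : HasSum a 1)
    (hC : HasSum (fun i : ℕ => (i : ℝ) * a i) C) (hC1 : 1 < C) :
    ∃ c ∈ Set.Ioo (0 : ℝ) 1, f c = c ∧
      (∀ c' ∈ Set.Ioo (0 : ℝ) 1, f c' = c' → c' = c) ∧
      f' c < 1 ∧
      (∀ z ∈ Set.Ico (0 : ℝ) 1, Tendsto (fun L : ℕ => f^[L] z) atTop (nhds c)) := by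
  refine chaotic_phase_unique_attracting_fixed_point_general a f f' ha hf
    (fun z hz ↦ hf' z (Ioo_subset_Icc_self hz)) ha0 hone ?_
  rwa [← ENNReal.ofReal_tsum_of_nonneg (fun i ↦ mul_nonneg i.cast_nonneg (ha i)) hC.summable,
    hC.tsum_eq, ENNReal.one_lt_ofReal]
end

section
/- Let f be given on [0,1] by a convergent power series f(z) = ∑_{i=0}^∞ a_i z^i with a_i ≥ 0 for all i, satisfying a_0 > 0 (f(0) > 0), ∑_i a_i = 1 (f(1) = 1), and ∑_i i·a_i < 1 (f'(1) < 1). Then for every z ∈ [0,1], lim_{L→∞} K_L(z) = 1/(1 - f'(1)). -/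
open Filter Set

/-!
A power series `f` with `∑ i * ‖aᵢ‖ < 1` contracts distances in the unit ball, so orbits in an
invariant set converge to the fixed point `p`, and the multipliers `f'(f^[L] z)` converge to
`f'(p)`. Hence `K_L(z)` solves an affine recursion whose coefficients converge to `p` and `f'(p)`,
and since `‖f'(p)‖ < 1` it forgets its initial value and tends to the fixed point `p / (1 - f'(p))`
of the limiting recursion.
-/

open scoped Topology

section Recursions

theorem tendsto_zero_of_eventually_le_mul_add {v d : ℕ → ℝ} {c : ℝ} (hc0 : 0 ≤ c) (hc1 : c < 1)
    (hv : ∀ n, 0 ≤ v n) (hrec : ∀ᶠ n in atTop, v (n + 1) ≤ c * v n + d n)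
    (hd : Tendsto d atTop (𝓝 0)) : Tendsto v atTop (𝓝 0) := by
  refine tendsto_order.2 ⟨fun r hr => .of_forall fun n => hr.trans_le (hv n), fun ε hε => ?_⟩
  have hδ : 0 < ε / 2 * (1 - c) := mul_pos (half_pos hε) (sub_pos.2 hc1)
  obtain ⟨N, hN⟩ := eventually_atTop.1 (hrec.and (hd.eventually_lt_const hδ))
  -- Once `d n < (1 - c) ε / 2`, the excess of `v` over `ε / 2` decays geometrically.
  have hgeom (k : ℕ) : v (k + N) - ε / 2 ≤ c ^ k * (v (0 + N) - ε / 2) := by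
    refine le_geom (u := fun k => v (k + N) - ε / 2) hc0 k fun j _ => ?_
    obtain ⟨hstep, hsmall⟩ := hN (j + N) (Nat.le_add_left N j)
    rw [add_right_comm j 1 N]
    linarith
  have hpow : Tendsto (fun k : ℕ => c ^ k * (v (0 + N) - ε / 2)) atTop (𝓝 0) := by
    simpa using (tendsto_pow_atTop_nhds_zero_of_lt_one hc0 hc1).mul_const (v (0 + N) - ε / 2)
  rw [← map_add_atTop_eq_nat N, eventually_map]
  filter_upwards [hpow.eventually_lt_const (half_pos hε)] with k hk
  linarith [hgeom k]

theorem tendsto_of_affine_recursion {𝕜 : Type*} [NormedField 𝕜] {u b m : ℕ → 𝕜} {β c : 𝕜}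
    (hc : ‖c‖ < 1) (hb : Tendsto b atTop (𝓝 β)) (hm : Tendsto m atTop (𝓝 c))
    (hrec : ∀ n, u (n + 1) = b n + u n * m n) : Tendsto u atTop (𝓝 (β / (1 - c))) := by
  obtain ⟨r, hcr, hr1⟩ := exists_between hc
  set l := β / (1 - c) with hl
  have hfix : β + l * c - l = 0 := by
    have hne : 1 - c ≠ 0 := sub_ne_zero.2 fun h => by simp [← h] at hc
    rw [hl]
    field_simp
    ring
  have hdefect : Tendsto (fun n => ‖b n + l * m n - l‖) atTop (𝓝 0) := by
    simpa [hfix] using ((hb.add (hm.const_mul l)).sub_const l).norm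
  refine tendsto_iff_norm_sub_tendsto_zero.2 <| tendsto_zero_of_eventually_le_mul_add
    ((norm_nonneg c).trans hcr.le) hr1 (fun _ => norm_nonneg _) ?_ hdefect
  filter_upwards [hm.norm.eventually_le_const hcr] with n hn
  calc ‖u (n + 1) - l‖ = ‖m n * (u n - l) + (b n + l * m n - l)‖ := by
        rw [hrec]; congr 1; ring
    _ ≤ ‖m n‖ * ‖u n - l‖ + ‖b n + l * m n - l‖ := by
        rw [← norm_mul]; exact norm_add_le _ _
    _ ≤ r * ‖u n - l‖ + ‖b n + l * m n - l‖ := by gcongr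

theorem tendsto_iterate_of_dist_le_mul {α : Type*} [PseudoMetricSpace α] {f : α → α} {s : Set α}
    {p x : α} {c : ℝ} (hc0 : 0 ≤ c) (hc1 : c < 1) (hmaps : MapsTo f s s)
    (hf : ∀ y ∈ s, dist (f y) p ≤ c * dist y p) (hx : x ∈ s) :
    Tendsto (fun n => f^[n] x) atTop (𝓝[s] p) := by
  have horbit (n : ℕ) : f^[n] x ∈ s := hmaps.iterate n hx
  have hgeom (n : ℕ) : dist (f^[n] x) p ≤ c ^ n * dist x p :=
    le_geom (u := fun n => dist (f^[n] x) p) hc0 n fun k _ => by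
      simpa only [Function.iterate_succ_apply'] using hf _ (horbit k)
  refine tendsto_nhdsWithin_iff.2 ⟨tendsto_iff_dist_tendsto_zero.2 ?_, .of_forall horbit⟩
  refine squeeze_zero (fun _ => dist_nonneg) hgeom ?_
  simpa using (tendsto_pow_atTop_nhds_zero_of_lt_one hc0 hc1).mul_const (dist x p)

end Recursions

section PowerSeries

theorem norm_pow_sub_pow_le_of_norm_le_one {R : Type*} [SeminormedRing R] [NormOneClass R]
    {x y : R} (hx : ‖x‖ ≤ 1) (hy : ‖y‖ ≤ 1) (n : ℕ) : ‖x ^ n - y ^ n‖ ≤ n * ‖x - y‖ := by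
  induction n with
  | zero => simp
  | succ n ih =>
    have hyn : ‖y ^ n‖ ≤ 1 := (norm_pow_le y n).trans (pow_le_one₀ (norm_nonneg y) hy)
    calc ‖x ^ (n + 1) - y ^ (n + 1)‖ = ‖x * (x ^ n - y ^ n) + (x - y) * y ^ n‖ := by
          rw [pow_succ', pow_succ']; congr 1; noncomm_ring
      _ ≤ ‖x‖ * ‖x ^ n - y ^ n‖ + ‖x - y‖ * ‖y ^ n‖ :=
          norm_add_le_of_le (norm_mul_le _ _) (norm_mul_le _ _)
      _ ≤ 1 * (n * ‖x - y‖) + ‖x - y‖ * 1 := by gcongr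
      _ = (n + 1 : ℕ) * ‖x - y‖ := by push_cast; ring

theorem mapsTo_Icc_of_hasSum_pow {a : ℕ → ℝ} {f : ℝ → ℝ} (ha : ∀ i, 0 ≤ a i) (hone : HasSum a 1)
    (hf : ∀ z ∈ Icc (0 : ℝ) 1, HasSum (fun i => a i * z ^ i) (f z)) :
    MapsTo f (Icc 0 1) (Icc 0 1) := fun z hz =>
  ⟨(hf z hz).nonneg fun i => mul_nonneg (ha i) (pow_nonneg hz.1 i),
    hasSum_le (fun i => mul_le_of_le_one_right (ha i) (pow_le_one₀ hz.1 hz.2)) (hf z hz) hone⟩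

variable {𝕜 : Type*} [NormedField 𝕜] {a : ℕ → 𝕜} {f f' : 𝕜 → 𝕜} {s : Set 𝕜} {D : ℝ}

theorem dist_le_mul_dist_of_hasSum_pow {x y fx fy : 𝕜} (hx : ‖x‖ ≤ 1) (hy : ‖y‖ ≤ 1)
    (hfx : HasSum (fun i => a i * x ^ i) fx) (hfy : HasSum (fun i => a i * y ^ i) fy)
    (hD : HasSum (fun i : ℕ => (i : ℝ) * ‖a i‖) D) : dist fx fy ≤ D * dist x y := by
  rw [dist_eq_norm, dist_eq_norm]
  refine (hfx.sub hfy).norm_le_of_bounded (hD.mul_right ‖x - y‖) fun i => ?_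
  calc ‖a i * x ^ i - a i * y ^ i‖ = ‖a i‖ * ‖x ^ i - y ^ i‖ := by rw [← mul_sub, norm_mul]
    _ ≤ ‖a i‖ * (i * ‖x - y‖) := by gcongr; exact norm_pow_sub_pow_le_of_norm_le_one hx hy i
    _ = i * ‖a i‖ * ‖x - y‖ := by ring

theorem norm_natCast_mul_mul_pow_pred_le {x : 𝕜} (hx : ‖x‖ ≤ 1) (c : 𝕜) (i : ℕ) :
    ‖(i : 𝕜) * c * x ^ (i - 1)‖ ≤ i * ‖c‖ := by
  rw [norm_mul, norm_mul, norm_pow]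
  have hi : ‖(i : 𝕜)‖ ≤ i := by simpa using Nat.norm_cast_le (α := 𝕜) i
  calc ‖(i : 𝕜)‖ * ‖c‖ * ‖x‖ ^ (i - 1) ≤ ‖(i : 𝕜)‖ * ‖c‖ :=
        mul_le_of_le_one_right (by positivity) (pow_le_one₀ (norm_nonneg x) hx)
    _ ≤ i * ‖c‖ := by gcongr

theorem continuousOn_of_hasSum_deriv_pow [CompleteSpace 𝕜] (hs : s ⊆ Metric.closedBall 0 1)
    (hf' : ∀ z ∈ s, HasSum (fun i : ℕ => (i : 𝕜) * a i * z ^ (i - 1)) (f' z))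
    (ha : Summable fun i : ℕ => (i : ℝ) * ‖a i‖) : ContinuousOn f' s := by
  have hcont := continuousOn_tsum (f := fun (i : ℕ) (z : 𝕜) => (i : 𝕜) * a i * z ^ (i - 1))
    (fun i => by fun_prop) ha fun i z hz =>
      norm_natCast_mul_mul_pow_pred_le (mem_closedBall_zero_iff.1 (hs hz)) (a i) i
  exact hcont.congr fun z hz => (hf' z hz).tsum_eq.symm

theorem ordered_phase_NTK_limit_general [CompleteSpace 𝕜] {K : ℕ → 𝕜 → 𝕜} {p : 𝕜}
    (hs : s ⊆ Metric.closedBall 0 1) (hmaps : MapsTo f s s)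
    (hf : ∀ z ∈ s, HasSum (fun i => a i * z ^ i) (f z))
    (hf' : ∀ z ∈ s, HasSum (fun i : ℕ => (i : 𝕜) * a i * z ^ (i - 1)) (f' z))
    (hD : HasSum (fun i : ℕ => (i : ℝ) * ‖a i‖) D) (hD1 : D < 1)
    (hp : p ∈ s) (hfix : Function.IsFixedPt f p)
    (hKrec : ∀ L, ∀ z ∈ s, K (L + 1) z = f^[L + 1] z + K L z * f' (f^[L] z)) :
    ∀ z ∈ s, Tendsto (fun L => K L z) atTop (𝓝 (p / (1 - f' p))) := by
  intro z hz
  have hball (x : 𝕜) (hx : x ∈ s) : ‖x‖ ≤ 1 := mem_closedBall_zero_iff.1 (hs hx)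
  have hcontr (x : 𝕜) (hx : x ∈ s) : dist (f x) p ≤ D * dist x p := by
    simpa only [hfix.eq] using
      dist_le_mul_dist_of_hasSum_pow (hball x hx) (hball p hp) (hf x hx) (hf p hp) hD
  have horbit : Tendsto (fun L => f^[L] z) atTop (𝓝[s] p) :=
    tendsto_iterate_of_dist_le_mul (hD.nonneg fun i => by positivity) hD1 hmaps hcontr hz
  have hmult : Tendsto (fun L => f' (f^[L] z)) atTop (𝓝 (f' p)) :=
    (continuousOn_of_hasSum_deriv_pow hs hf' hD.summable p hp).tendsto.comp horbit
  have hf'p : ‖f' p‖ ≤ D :=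
    (hf' p hp).norm_le_of_bounded hD fun i => norm_natCast_mul_mul_pow_pred_le (hball p hp) (a i) i
  exact tendsto_of_affine_recursion (hf'p.trans_lt hD1)
    ((tendsto_nhds_of_tendsto_nhdsWithin horbit).comp (tendsto_add_atTop_nat 1)) hmult
    fun L => hKrec L z hz

end PowerSeries

/-- Ordered phase NTK limit (from Lemma 8 of the paper): for a dual activation
`f(z) = ∑ aᵢ zⁱ` with nonnegative coefficients, `f(0) > 0`, `f(1) = 1`, and
`f'(1) = ∑ i·aᵢ < 1`, the depth-`L` NTK satisfies `K_L(z) → 1/(1 - f'(1))`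
for every `z ∈ [0,1]`. -/
theorem ordered_phase_NTK_limit
    (a : ℕ → ℝ) (f f' : ℝ → ℝ) (K : ℕ → ℝ → ℝ) (C : ℝ)
    (ha : ∀ i, 0 ≤ a i)
    (hf : ∀ z ∈ Set.Icc (0 : ℝ) 1, HasSum (fun i => a i * z ^ i) (f z))
    (hf' : ∀ z ∈ Set.Icc (0 : ℝ) 1, HasSum (fun i : ℕ => (i : ℝ) * a i * z ^ (i - 1)) (f' z))
    (ha0 : 0 < a 0) (hone : HasSum a 1)
    (hC : HasSum (fun i : ℕ => (i : ℝ) * a i) C) (hC1 : C < 1)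
    (hK0 : ∀ z, K 0 z = z)
    (hKrec : ∀ L z, K (L + 1) z = f^[L + 1] z + K L z * f' (f^[L] z)) :
    ∀ z ∈ Set.Icc (0 : ℝ) 1,
      Tendsto (fun L : ℕ => K L z) atTop (nhds (1 / (1 - C))) := by
  have h1 : (1 : ℝ) ∈ Icc (0 : ℝ) 1 := right_mem_Icc.2 zero_le_one
  have hball : Icc (0 : ℝ) 1 ⊆ Metric.closedBall 0 1 := by
    rw [Real.closedBall_eq_Icc]
    exact Icc_subset_Icc (by norm_num) (by norm_num)
  have hfix : f 1 = 1 := (hf 1 h1).unique (by simpa using hone)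
  obtain rfl : f' 1 = C := (hf' 1 h1).unique (by simpa using hC)
  exact ordered_phase_NTK_limit_general hball (mapsTo_Icc_of_hasSum_pow ha hone hf) hf hf'
    (by simpa only [Real.norm_of_nonneg (ha _)] using hC) hC1 h1 hfix fun L z _ => hKrec L z
end

section
/- Let d ≥ 2 be an integer and define φ : ℝ → ℝ by φ(x) = 2^{-d/4}·(x³ - 3x)/√6 + √(1 - 2·2^{-d/2})·(x² - 1)/√2 + 2^{-d/4}·x. Then for every z ∈ [-1,1], with u and w independent standard Gaussian random variables (mean 0, variance 1), E[φ(u)·φ(z·u + √(1-z²)·w)] = 2^{-d/2}·z³ + (1 - 2·2^{-d/2})·z² + 2^{-d/2}·z. In particular, the dual activation f(z) of φ satisfies f(0) = 0, f(1) = 1, f'(0) = 2^{-d/2}, f'(1) = 2, and -log f'(0)/log f'(1) = d/2. -/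
open MeasureTheory ProbabilityTheory Set

/-!
Stein's identity `𝔼[x P(x)] = 𝔼[P'(x)]` together with `Heₙ₊₁ = X Heₙ - Heₙ'` shows both that the
Hermite polynomials are orthogonal for the standard Gaussian measure and that they are
eigenfunctions of the Ornstein–Uhlenbeck semigroup: `𝔼[Heₙ(z u + √(1 - z²) w)] = zⁿ Heₙ(u)` for
fixed `u`. Hence an activation with normalised Hermite coefficients `cₙ` has dual activation
`∑ cₙ² zⁿ`, and `φ` is chosen so that these squares are `2^{-d/2}`, `1 - 2·2^{-d/2}`, `2^{-d/2}`.
-/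

open Polynomial

open scoped NNReal

section PolynomialMoments

variable {Ω R : Type*} {mΩ : MeasurableSpace Ω} {μ : Measure Ω} [IsFiniteMeasure μ]
  [CommSemiring R] [Algebra R ℝ] {f : Ω → ℝ}

lemma integrable_aeval_of_forall_memLp (hf : ∀ n : ℕ, MemLp f n μ) (P : R[X]) :
    Integrable (fun ω ↦ aeval (f ω) P) μ := by
  have integrable_pow (n : ℕ) : Integrable (fun ω ↦ f ω ^ n) μ :=
    (hf n).integrable_norm_pow'.mono ((hf n).aestronglyMeasurable.pow n) (by simp)
  simp only [aeval_eq_sum_range, Algebra.smul_def]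
  exact integrable_finsetSum _ fun n _ ↦ (integrable_pow n).const_mul _

lemma memLp_two_aeval_of_forall_memLp (hf : ∀ n : ℕ, MemLp f n μ) (P : R[X]) :
    MemLp (fun ω ↦ aeval (f ω) P) 2 μ := by
  refine (memLp_two_iff_integrable_sq
    (integrable_aeval_of_forall_memLp hf P).aestronglyMeasurable).2 ?_
  exact (integrable_aeval_of_forall_memLp hf (P ^ 2)).congr (.of_forall fun ω ↦ map_pow _ P 2)

lemma integrable_aeval_mul_aeval_of_forall_memLp {g : Ω → ℝ} (hf : ∀ n : ℕ, MemLp f n μ)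
    (hg : ∀ n : ℕ, MemLp g n μ) (P Q : R[X]) :
    Integrable (fun ω ↦ aeval (f ω) P * aeval (g ω) Q) μ :=
  (memLp_two_aeval_of_forall_memLp hf P).integrable_mul (memLp_two_aeval_of_forall_memLp hg Q)

lemma integrable_aeval_fst_mul_aeval_linear {γ δ : Measure ℝ} [IsGaussian γ] [IsGaussian δ]
    (P Q : R[X]) (z s : ℝ) :
    Integrable (fun p : ℝ × ℝ ↦ aeval p.1 P * aeval (z * p.1 + s * p.2) Q) (γ.prod δ) := by
  have memLp_dual (L : StrongDual ℝ (ℝ × ℝ)) (n : ℕ) : MemLp L n (γ.prod δ) :=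
    IsGaussian.memLp_dual _ L n (ENNReal.natCast_ne_top n)
  exact integrable_aeval_mul_aeval_of_forall_memLp (memLp_dual (.fst ℝ ℝ ℝ))
    (memLp_dual (z • .fst ℝ ℝ ℝ + s • .snd ℝ ℝ ℝ)) P Q

end PolynomialMoments

section GaussianIntegrationByParts

lemma hasDerivAt_gaussianPDFReal (m : ℝ) (v : ℝ≥0) (x : ℝ) :
    HasDerivAt (gaussianPDFReal m v) (-((x - m) / v) * gaussianPDFReal m v x) x := by
  have hexponent : HasDerivAt (fun y : ℝ ↦ -(y - m) ^ 2 / (2 * v)) (-((x - m) / v)) x := by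
    convert! (((hasDerivAt_id x).sub_const m).pow 2).neg.div_const (2 * (v : ℝ)) using 1
    simp only [id, Nat.cast_ofNat, Nat.add_one_sub_one, pow_one, mul_one]
    rw [← mul_neg, mul_div_mul_left _ _ two_ne_zero, neg_div]
  convert! hexponent.exp.const_mul (√(2 * Real.pi * v))⁻¹ using 1
  rw [gaussianPDFReal]
  ring

variable {m : ℝ} {v : ℝ≥0}

lemma integrable_gaussianReal_iff (hv : v ≠ 0) {f : ℝ → ℝ} :
    Integrable f (gaussianReal m v) ↔ Integrable (fun x ↦ f x * gaussianPDFReal m v x) := by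
  rw [gaussianReal_of_var_ne_zero m hv, integrable_withDensity_iff (measurable_gaussianPDF m v)
    (.of_forall fun _ ↦ gaussianPDF_lt_top)]
  simp only [toReal_gaussianPDF]

lemma integral_sub_mul_gaussianReal {f f' : ℝ → ℝ} (hderiv : ∀ x, HasDerivAt f (f' x) x)
    (hf : Integrable f (gaussianReal m v)) (hf' : Integrable f' (gaussianReal m v))
    (hmul : Integrable (fun x ↦ (x - m) * f x) (gaussianReal m v)) :
    ∫ x, (x - m) * f x ∂gaussianReal m v = v * ∫ x, f' x ∂gaussianReal m v := by
  obtain rfl | hv := eq_or_ne v 0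
  · simp
  have hv' : (v : ℝ) ≠ 0 := NNReal.coe_ne_zero.2 hv
  rw [integrable_gaussianReal_iff hv] at hf hf' hmul
  have hweight (x : ℝ) : f x * (-((x - m) / v) * gaussianPDFReal m v x) =
      -(v : ℝ)⁻¹ * ((x - m) * f x * gaussianPDFReal m v x) := by ring
  have hparts := integral_mul_deriv_eq_deriv_mul_of_integrable (fun x _ ↦ hderiv x)
    (fun x _ ↦ hasDerivAt_gaussianPDFReal m v x)
    ((hmul.const_mul (-(v : ℝ)⁻¹)).congr (.of_forall fun x ↦ (hweight x).symm)) hf' hf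
  simp only [hweight, integral_const_mul] at hparts
  simp only [integral_gaussianReal_eq_integral_smul hv, smul_eq_mul,
    mul_comm (gaussianPDFReal m v _)]
  field_simp at hparts
  linarith

variable {R : Type*} [CommSemiring R] [Algebra R ℝ]

lemma memLp_affine_gaussianReal (a b : ℝ) (n : ℕ) :
    MemLp (fun x ↦ a + b * x) n (gaussianReal m v) :=
  (memLp_const a).add ((memLp_id_gaussianReal (n : ℝ≥0)).const_mul b)

lemma integrable_aeval_affine_gaussianReal (P : R[X]) (a b : ℝ) :
    Integrable (fun x ↦ aeval (a + b * x) P) (gaussianReal m v) :=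
  integrable_aeval_of_forall_memLp (memLp_affine_gaussianReal a b) P

lemma integrable_sub_mul_aeval_affine_gaussianReal (P : R[X]) (a b : ℝ) :
    Integrable (fun x ↦ (x - m) * aeval (a + b * x) P) (gaussianReal m v) :=
  ((memLp_id_gaussianReal' 2 ENNReal.ofNat_ne_top).sub (memLp_const m)).integrable_mul
    (memLp_two_aeval_of_forall_memLp (memLp_affine_gaussianReal a b) P)

lemma integral_sub_mul_aeval_affine_gaussianReal (P : R[X]) (a b : ℝ) :
    ∫ x, (x - m) * aeval (a + b * x) P ∂gaussianReal m v =
      v * (b * ∫ x, aeval (a + b * x) (derivative P) ∂gaussianReal m v) := by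
  have hderiv (x : ℝ) : HasDerivAt (fun x ↦ aeval (a + b * x) P)
      (b * aeval (a + b * x) (derivative P)) x := by
    rw [mul_comm]
    exact (P.hasDerivAt_aeval (a + b * x)).comp x
      (((hasDerivAt_id x).const_mul b).const_add a |>.congr_deriv (mul_one b))
  rw [← integral_const_mul b]
  exact integral_sub_mul_gaussianReal hderiv (integrable_aeval_affine_gaussianReal P a b)
    ((integrable_aeval_affine_gaussianReal (derivative P) a b).const_mul b)
    (integrable_sub_mul_aeval_affine_gaussianReal P a b)

lemma integral_mul_aeval_affine_gaussianReal_zero_one (P : R[X]) (a b : ℝ) :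
    ∫ x, x * aeval (a + b * x) P ∂gaussianReal 0 1 =
      b * ∫ x, aeval (a + b * x) (derivative P) ∂gaussianReal 0 1 := by
  simpa using integral_sub_mul_aeval_affine_gaussianReal (m := 0) (v := 1) P a b

end GaussianIntegrationByParts

section Hermite

lemma derivative_hermite_succ (n : ℕ) :
    derivative (hermite (n + 1)) = (n + 1 : ℤ[X]) * hermite n := by
  induction n with
  | zero => simp
  | succ n ih =>
    rw [hermite_succ (n + 1), derivative_sub, derivative_mul, ih, hermite_succ n]
    simp only [derivative_X, derivative_mul, derivative_add, derivative_natCast, derivative_one]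
    push_cast
    ring

lemma integral_aeval_hermite_succ_linear {z s : ℝ} (hzs : z ^ 2 + s ^ 2 = 1) (u : ℝ) (n : ℕ) :
    ∫ w, aeval (z * u + s * w) (hermite (n + 1)) ∂gaussianReal 0 1 =
      z * u * ∫ w, aeval (z * u + s * w) (hermite n) ∂gaussianReal 0 1 -
        z ^ 2 * ∫ w, aeval (z * u + s * w) (derivative (hermite n)) ∂gaussianReal 0 1 := by
  have hexpand (w : ℝ) : aeval (z * u + s * w) (hermite (n + 1)) =
      z * u * aeval (z * u + s * w) (hermite n) + s * (w * aeval (z * u + s * w) (hermite n)) -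
        aeval (z * u + s * w) (derivative (hermite n)) := by
    simp only [hermite_succ, map_sub, map_mul, aeval_X]
    ring
  have hint (P : ℤ[X]) := integrable_aeval_affine_gaussianReal (m := 0) (v := 1) P (z * u) s
  have hint_mul : Integrable (fun w ↦ w * aeval (z * u + s * w) (hermite n))
      (gaussianReal 0 1) := by
    simpa only [sub_zero] using
      integrable_sub_mul_aeval_affine_gaussianReal (m := 0) (hermite n) (z * u) s
  simp only [hexpand]
  rw [integral_sub (((hint _).const_mul _).fun_add (hint_mul.const_mul _)) (hint _),
    integral_add ((hint _).const_mul _) (hint_mul.const_mul _), integral_const_mul,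
    integral_const_mul, integral_mul_aeval_affine_gaussianReal_zero_one]
  linear_combination
    hzs * ∫ w, aeval (z * u + s * w) (derivative (hermite n)) ∂gaussianReal 0 1

lemma integral_aeval_hermite_linear {z s : ℝ} (hzs : z ^ 2 + s ^ 2 = 1) (u : ℝ) (n : ℕ) :
    ∫ w, aeval (z * u + s * w) (hermite n) ∂gaussianReal 0 1 = z ^ n * aeval u (hermite n) := by
  induction n using Nat.twoStepInduction with
  | zero => simp
  | one =>
    rw [integral_aeval_hermite_succ_linear hzs]
    simp
  | more n ih ih' =>
    rw [integral_aeval_hermite_succ_linear hzs, ih', hermite_succ (n + 1), derivative_hermite_succ]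
    simp only [map_sub, map_mul, map_add, aeval_X, map_natCast, map_one, integral_const_mul, ih]
    ring

lemma integral_aeval_hermite_succ_mul (n : ℕ) (P : ℤ[X]) :
    ∫ x, aeval x (hermite (n + 1)) * aeval x P ∂gaussianReal 0 1 =
      ∫ x, aeval x (hermite n) * aeval x (derivative P) ∂gaussianReal 0 1 := by
  have hint (Q : ℤ[X]) : Integrable (fun x ↦ aeval x Q) (gaussianReal 0 1) :=
    integrable_aeval_of_forall_memLp (fun k ↦ memLp_id_gaussianReal (k : ℝ≥0)) Q
  have hparts : ∫ x, aeval x (X * (hermite n * P)) ∂gaussianReal 0 1 =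
      ∫ x, aeval x (derivative (hermite n * P)) ∂gaussianReal 0 1 := by
    simpa using integral_mul_aeval_affine_gaussianReal_zero_one (hermite n * P) 0 1
  calc ∫ x, aeval x (hermite (n + 1)) * aeval x P ∂gaussianReal 0 1
    _ = ∫ x, (aeval x (X * (hermite n * P)) - aeval x (derivative (hermite n) * P))
          ∂gaussianReal 0 1 := by
      simp only [← map_mul, ← map_sub, hermite_succ, sub_mul, mul_assoc]
    _ = ∫ x, (aeval x (derivative (hermite n * P)) - aeval x (derivative (hermite n) * P))
          ∂gaussianReal 0 1 := by
      rw [integral_sub (hint _) (hint _), hparts, integral_sub (hint _) (hint _)]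
    _ = ∫ x, aeval x (hermite n) * aeval x (derivative P) ∂gaussianReal 0 1 := by
      simp only [← map_mul, ← map_sub, derivative_mul, add_sub_cancel_left]

lemma integral_aeval_hermite_succ (n : ℕ) :
    ∫ x, aeval x (hermite (n + 1)) ∂gaussianReal 0 1 = 0 := by
  simpa [-hermite_succ] using integral_aeval_hermite_succ_mul n 1

lemma integral_aeval_hermite_mul_aeval_hermite (m n : ℕ) :
    ∫ x, aeval x (hermite m) * aeval x (hermite n) ∂gaussianReal 0 1 =
      if m = n then (n.factorial : ℝ) else 0 := by
  induction n generalizing m with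
  | zero =>
    cases m with
    | zero => simp
    | succ m => simp [integral_aeval_hermite_succ, -hermite_succ]
  | succ n ih =>
    cases m with
    | zero => simp [integral_aeval_hermite_succ, -hermite_succ]
    | succ m =>
      rw [integral_aeval_hermite_succ_mul]
      simp only [derivative_hermite_succ, map_mul, map_add, map_natCast, map_one, mul_left_comm,
        integral_const_mul, ih, add_left_inj]
      simp [Nat.factorial_succ]

lemma integral_aeval_hermite_fst_mul_aeval_hermite_linear {z s : ℝ} (hzs : z ^ 2 + s ^ 2 = 1)
    (m n : ℕ) :
    ∫ p : ℝ × ℝ, aeval p.1 (hermite m) * aeval (z * p.1 + s * p.2) (hermite n)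
      ∂(gaussianReal 0 1).prod (gaussianReal 0 1) =
      if m = n then n.factorial * z ^ n else 0 := by
  rw [integral_prod _ (integrable_aeval_fst_mul_aeval_linear _ _ z s)]
  simp only [integral_const_mul, integral_aeval_hermite_linear hzs, mul_left_comm _ (z ^ n),
    integral_aeval_hermite_mul_aeval_hermite, mul_ite, mul_zero, mul_comm]

end Hermite

section DualActivation

/-- The dual activation `z ↦ 𝔼[φ(u) φ(v)]` of an activation `φ`, where `(u, v)` is a centred
Gaussian pair with unit variances and correlation `z`. The pair is realised as
`(u, z u + √(1 - z²) w)` with `u, w` independent, so only `z ∈ [-1, 1]` is meaningful. -/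
noncomputable def dualActivation (φ : ℝ → ℝ) (z : ℝ) : ℝ :=
  ∫ p : ℝ × ℝ, φ p.1 * φ (z * p.1 + √(1 - z ^ 2) * p.2)
    ∂(gaussianReal 0 1).prod (gaussianReal 0 1)

/-- The probabilists' Hermite polynomials, as functions on `ℝ`, scaled to be orthonormal in `L²` of
the standard Gaussian measure; the dual activation is diagonal in this basis. -/
noncomputable def normalizedHermite (n : ℕ) (x : ℝ) : ℝ :=
  aeval x (hermite n) / √n.factorial

lemma normalizedHermite_one (x : ℝ) : normalizedHermite 1 x = x := by
  simp [normalizedHermite]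

lemma normalizedHermite_two (x : ℝ) : normalizedHermite 2 x = (x ^ 2 - 1) / √2 := by
  simp [normalizedHermite, pow_two]

lemma normalizedHermite_three (x : ℝ) : normalizedHermite 3 x = (x ^ 3 - 3 * x) / √6 := by
  have hhermite : aeval x (hermite 3) = x ^ 3 - 3 * x := by
    simp only [hermite_succ, hermite_zero, map_sub, map_mul, map_one, mul_one, derivative_one,
      derivative_mul, derivative_X, map_add, aeval_X, sub_zero]
    ring
  rw [normalizedHermite, hhermite]
  norm_num [Nat.factorial]

lemma integrable_normalizedHermite_mul_normalizedHermite (z s : ℝ) (m n : ℕ) :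
    Integrable (fun p : ℝ × ℝ ↦ normalizedHermite m p.1 * normalizedHermite n (z * p.1 + s * p.2))
      ((gaussianReal 0 1).prod (gaussianReal 0 1)) := by
  simp only [normalizedHermite, div_mul_div_comm]
  exact (integrable_aeval_fst_mul_aeval_linear _ _ z s).div_const _

lemma integral_normalizedHermite_mul_normalizedHermite {z s : ℝ} (hzs : z ^ 2 + s ^ 2 = 1)
    (m n : ℕ) :
    ∫ p : ℝ × ℝ, normalizedHermite m p.1 * normalizedHermite n (z * p.1 + s * p.2)
      ∂(gaussianReal 0 1).prod (gaussianReal 0 1) = if m = n then z ^ n else 0 := by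
  simp only [normalizedHermite, div_mul_div_comm, integral_div,
    integral_aeval_hermite_fst_mul_aeval_hermite_linear hzs]
  obtain rfl | hmn := eq_or_ne m n
  · have hfact : (m.factorial : ℝ) ≠ 0 := Nat.cast_ne_zero.2 m.factorial_ne_zero
    simp only [if_true, Real.mul_self_sqrt (Nat.cast_nonneg _), mul_div_cancel_left₀ _ hfact]
  · simp only [if_neg hmn, zero_div]

theorem dualActivation_sum_normalizedHermite (I : Finset ℕ) (c : ℕ → ℝ) {z : ℝ}
    (hz : z ∈ Icc (-1) 1) :
    dualActivation (fun x ↦ ∑ n ∈ I, c n * normalizedHermite n x) z = ∑ n ∈ I, c n ^ 2 * z ^ n := by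
  have hcorr : z ^ 2 + √(1 - z ^ 2) ^ 2 = 1 := by
    rw [Real.sq_sqrt (sub_nonneg.2 ((sq_le_one_iff_abs_le_one z).2 (abs_le.2 hz))),
      add_sub_cancel]
  have hint (m n : ℕ) :=
    (integrable_normalizedHermite_mul_normalizedHermite z (√(1 - z ^ 2)) m n).const_mul (c m * c n)
  simp only [dualActivation, Finset.sum_mul_sum, mul_mul_mul_comm (c _)]
  rw [integral_finsetSum _ fun m _ ↦ integrable_finsetSum _ fun n _ ↦ hint m n]
  refine Finset.sum_congr rfl fun m hm ↦ ?_
  rw [integral_finsetSum _ fun n _ ↦ hint m n]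
  simp only [integral_const_mul, integral_normalizedHermite_mul_normalizedHermite hcorr,
    mul_ite, mul_zero, Finset.sum_ite_eq, if_pos hm, ← sq]

lemma dualActivation_cubic (a b c : ℝ) {z : ℝ} (hz : z ∈ Icc (-1) 1) :
    dualActivation (fun x ↦ a * ((x ^ 3 - 3 * x) / √6) + b * ((x ^ 2 - 1) / √2) + c * x) z =
      a ^ 2 * z ^ 3 + b ^ 2 * z ^ 2 + c ^ 2 * z := by
  let coeff : ℕ → ℝ := fun | 1 => c | 2 => b | 3 => a | _ => 0
  have h := dualActivation_sum_normalizedHermite {3, 2, 1} coeff hz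
  simpa [coeff, normalizedHermite_one, normalizedHermite_two, normalizedHermite_three,
    ← add_assoc] using h

end DualActivation

section Coefficients

lemma hasDerivAt_cubic {𝕜 : Type*} [NontriviallyNormedField 𝕜] (a b c x : 𝕜) :
    HasDerivAt (fun z ↦ a * z ^ 3 + b * z ^ 2 + c * z) (3 * a * x ^ 2 + 2 * b * x + c) x := by
  convert! (((hasDerivAt_pow 3 x).const_mul a).add ((hasDerivAt_pow 2 x).const_mul b)).add
    ((hasDerivAt_id x).const_mul c) using 1
  push_cast
  ring

lemma rpow_div_four_sq {x : ℝ} (hx : 0 ≤ x) (y : ℝ) : (x ^ (y / 4)) ^ 2 = x ^ (y / 2) := by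
  rw [← Real.rpow_mul_natCast hx]
  congr 1
  push_cast
  ring

lemma one_sub_two_mul_two_rpow_nonneg {d : ℝ} (hd : 2 ≤ d) :
    0 ≤ 1 - 2 * (2 : ℝ) ^ (-d / 2) := by
  have hle : (2 : ℝ) ^ (-d / 2) ≤ 2 ^ (-1 : ℝ) :=
    Real.rpow_le_rpow_of_exponent_le one_le_two (by linarith)
  rw [Real.rpow_neg_one] at hle
  linarith

end Coefficients

theorem optimal_activation_dual_activation_general
    (d : ℝ) (hd : 2 ≤ d) (φ g : ℝ → ℝ)
    (hφ : ∀ x : ℝ, φ x =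
      (2 : ℝ) ^ (-d / 4) * ((x ^ 3 - 3 * x) / √6) +
      √(1 - 2 * (2 : ℝ) ^ (-d / 2)) * ((x ^ 2 - 1) / √2) + (2 : ℝ) ^ (-d / 4) * x)
    (hg : ∀ z : ℝ, g z =
      (2 : ℝ) ^ (-d / 2) * z ^ 3 + (1 - 2 * (2 : ℝ) ^ (-d / 2)) * z ^ 2 + (2 : ℝ) ^ (-d / 2) * z) :
    (∀ z ∈ Icc (-1 : ℝ) 1, dualActivation φ z = g z) ∧
    g 0 = 0 ∧ g 1 = 1 ∧
    HasDerivAt g ((2 : ℝ) ^ (-d / 2)) 0 ∧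
    HasDerivAt g 2 1 ∧
    -Real.log ((2 : ℝ) ^ (-d / 2)) / Real.log 2 = d / 2 := by
  have hderiv := hasDerivAt_cubic ((2 : ℝ) ^ (-d / 2)) (1 - 2 * (2 : ℝ) ^ (-d / 2)) (2 ^ (-d / 2))
  rw [← funext hg] at hderiv
  refine ⟨fun z hz ↦ ?_, by rw [hg]; ring, by rw [hg]; ring, ?_, ?_, ?_⟩
  · rw [funext hφ, dualActivation_cubic _ _ _ hz, rpow_div_four_sq zero_le_two,
      Real.sq_sqrt (one_sub_two_mul_two_rpow_nonneg hd), hg]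
  · exact (hderiv 0).congr_deriv (by ring)
  · exact (hderiv 1).congr_deriv (by ring)
  · rw [Real.log_rpow two_pos, ← neg_mul, mul_div_cancel_right₀ _ (Real.log_pos one_lt_two).ne',
      neg_div, neg_neg]

/-- Corollary 1 of the paper (the case `d ≥ 2`): the activation
`φ(x) = 2^{-d/4}(x³-3x)/√6 + √(1-2·2^{-d/2})(x²-1)/√2 + 2^{-d/4}x` has dual activation
`f(z) = E[φ(u)φ(zu + √(1-z²)w)] = 2^{-d/2}z³ + (1-2·2^{-d/2})z² + 2^{-d/2}z`
(for `u, w` independent standard Gaussians and `z ∈ [-1,1]`); in particular the dual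
activation satisfies `f(0) = 0`, `f(1) = 1`, `f'(0) = 2^{-d/2}`, `f'(1) = 2`, and
`-log f'(0)/log f'(1) = d/2`. -/
theorem optimal_activation_dual_activation
    (d : ℕ) (hd : 2 ≤ d) (φ g : ℝ → ℝ)
    (hφ : ∀ x : ℝ, φ x =
      (2 : ℝ) ^ (-(d : ℝ) / 4) * ((x ^ 3 - 3 * x) / Real.sqrt 6) +
      Real.sqrt (1 - 2 * (2 : ℝ) ^ (-(d : ℝ) / 2)) * ((x ^ 2 - 1) / Real.sqrt 2) +
      (2 : ℝ) ^ (-(d : ℝ) / 4) * x)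
    (hg : ∀ z : ℝ, g z =
      (2 : ℝ) ^ (-(d : ℝ) / 2) * z ^ 3 + (1 - 2 * (2 : ℝ) ^ (-(d : ℝ) / 2)) * z ^ 2 +
      (2 : ℝ) ^ (-(d : ℝ) / 2) * z) :
    (∀ z ∈ Set.Icc (-1 : ℝ) 1,
      ∫ p : ℝ × ℝ, φ p.1 * φ (z * p.1 + Real.sqrt (1 - z ^ 2) * p.2)
          ∂((gaussianReal 0 1).prod (gaussianReal 0 1)) = g z) ∧
    g 0 = 0 ∧ g 1 = 1 ∧
    HasDerivAt g ((2 : ℝ) ^ (-(d : ℝ) / 2)) 0 ∧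
    HasDerivAt g 2 1 ∧
    -Real.log ((2 : ℝ) ^ (-(d : ℝ) / 2)) / Real.log 2 = (d : ℝ) / 2 := by
  exact optimal_activation_dual_activation_general d (by exact_mod_cast hd) φ g hφ hg
end
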